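/- Let Φ be a smooth Schwartz-class function compactly supported in (1,2) with 0 ≤ Φ(t) ≤ 1 for all t. Then for every ε > 0, as y → ∞, the sum over square-free c ∈ ℤ[i] with c ≡ 1 (mod 16) of |L(1/2, χ_c)|²·Φ(N(c)/y) is ≪_ε y^{1+ε}. -/

import Mathlib

/-!
The argument avoids the quadratic large sieve: at the central point the `L`-values are integrals of
theta series, and the mean square of the theta series over all moduli can be computed by
expanding the square.

For square-free `c ≡ 1 (mod 16)`, `c ≠ 1`, the value `L(1/2, χ_c)` is, up to a constant, the Mellin
transform at `1/2` of `thq c t = ∑ χ_c(α) exp(-π t N(α))` (`mellin_thq_half`). Poisson summation on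
`ℤ[i]` and the evaluation of Gauss sums (`gs_eq`, `gs_norm`) give the functional equation `thq_fe`
relating `t` and `1 / (t N(c))`, which folds the integral onto large arguments (`central_le`):
`|L(1/2, χ_c)| ≤ 2 ∫_{u > X} |thq c u| u^{-1/2} du` whenever `X ≤ N(c)^{-1/2}`.

The even `α` are sieved out at the price of a constant factor (`tho_int_le`), and on odd `α`
quadratic reciprocity (`sym_recip16`) replaces `(α/c)` by `(c/α)`, a symbol that makes sense for
every `c`. Reciprocity is deduced from the Jacobi symbol over `ℤ` by computing symbols modulo split
and inert primes. By the Cauchy-Schwarz inequality with an extra weight `u^δ`, `|L(1/2, χ_c)|^2` is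
at most a constant times `X^{-δ} ∫_{u > X} (tho c u)^2 u^δ du` (`central_sq_le`).

By positivity the average over `c` may be extended to all of `ℤ[i]` with the weight
`exp(-π N(c) / y)`. After expanding `(tho c u)^2` as a double sum over odd `α, β`, the inner sum over
`c` is the theta series of the character `(·/αβ)` at `1/y`. If `αβ` is a unit times a square, the
trivial bound `O(y)` is used, and there are few such pairs (`sqU_param`, `diag_le`). Otherwise the
character is not principal and the functional equation bounds the theta series by `√N(αβ)` for
all arguments (`thq_le'`). This yields the mean square bound
`≪ y u^{-σ} + u^{-(2σ + 1)}` for every `σ > 1` (`mean_square`). Integrating over `u > X` with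
`X = (2y)^{-1/2}` gives `y^{1+ε}` (`integrated_mean_square`, `moment_le`).
-/

open Complex GaussianInt MeasureTheory Asymptotics Filter
open scoped ComplexConjugate

noncomputable section

/-- The element `i` of `ℤ[i]`. -/
def gi : GaussianInt := ⟨0, 1⟩

/-- The norm `N(a+bi) = a² + b²` of a Gaussian integer, as a natural number. -/
def gnorm (a : GaussianInt) : ℕ := a.norm.natAbs

/-- An element of `ℤ[i]` is primary if it is `≡ 1 (mod (1+i)³)`. -/
def IsPrimary (a : GaussianInt) : Prop := (1 + gi) ^ 3 ∣ a - 1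

/-- `c ≡ 1 (mod 16)` in `ℤ[i]`. -/
def ModOne16 (c : GaussianInt) : Prop := (16 : GaussianInt) ∣ c - 1

open scoped Classical in
/-- The quartic residue symbol `(a/π)₄` for a prime `π` of odd norm:
the unique unit `u ∈ {±1, ±i}` with `a^((N(π)-1)/4) ≡ u (mod π)` if it exists
(i.e. when `π ∤ a`), and `0` otherwise. -/
def quarticSymbolPrime (a π : GaussianInt) : GaussianInt :=
  if h : ∃ u : GaussianInt, IsUnit u ∧ π ∣ a ^ ((gnorm π - 1) / 4) - u then h.choose else 0

/-- The quartic residue symbol `(a/n)₄`, extended multiplicatively in the lower entry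
(via a prime factorization of `n`; each prime factor's symbol only depends on its
associate class, so this is well defined). -/
def quarticSymbol (a n : GaussianInt) : GaussianInt :=
  ((UniqueFactorizationMonoid.factors n).map fun π => quarticSymbolPrime a π).prod

/-- The quadratic residue symbol `(a/n) = ((a/n)₄)²`. -/
def quadSymbol (a n : GaussianInt) : GaussianInt := quarticSymbol a n ^ 2

/-- A generator of an ideal of the principal ideal domain `ℤ[i]`. -/
def idealGen (A : Ideal GaussianInt) : GaussianInt := Submodule.IsPrincipal.generator A

/-- The absolute norm of an ideal of `ℤ[i]`. -/
def idealNorm (A : Ideal GaussianInt) : ℕ := gnorm (idealGen A)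

/-- The quadratic Hecke character `χ_c`, as a function of nonzero integral ideals:
`χ_c(A) = (α/c)` for a generator `α` of `A` (for square-free `c ≡ 1 (mod 16)` this is
independent of the generator, since `χ_c` is trivial on units). -/
def heckeChar (c : GaussianInt) (A : Ideal GaussianInt) : ℂ :=
  toComplex (quadSymbol (idealGen A) c)

/-- Predicate expressing that `L : ℂ → ℂ` is the analytic continuation of the
Hecke `L`-function `L(s, χ_c)`: it is given by the Dirichlet series
`Σ_{0 ≠ A} χ_c(A) N(A)^{-s}` for `Re(s) > 1` and is differentiable away from `s = 1`
(at `s = 1` the principal character gives the Dedekind zeta function, which has a pole). -/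
def IsHeckeL (c : GaussianInt) (L : ℂ → ℂ) : Prop :=
  (∀ s : ℂ, 1 < s.re → HasSum
      (fun A : {A : Ideal GaussianInt // A ≠ ⊥} =>
        heckeChar c A.1 * (idealNorm A.1 : ℂ) ^ (-s)) (L s)) ∧
  ∀ s : ℂ, s ≠ 1 → DifferentiableAt ℂ L s

/-- The constant `A = ∏_{π prime, (π,2)=1} (1 - 1/((N(π)+1)N(π)))`, the product running
over the odd primes of `ℤ[i]` (equivalently, over odd nonzero prime ideals). -/
def eulerConstA : ℝ :=
  ∏' P : {P : Ideal GaussianInt // P.IsPrime ∧ P ≠ ⊥ ∧ (2 : GaussianInt) ∉ P},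
    (1 - ((idealNorm P.1 + 1) * (idealNorm P.1) : ℝ)⁻¹)

/-- The value `ζ_{ℚ(i)}(2)` of the Dedekind zeta function of `ℚ(i)` at `2`. -/
def zetaQi2 : ℝ := ∑' A : {A : Ideal GaussianInt // A ≠ ⊥}, ((idealNorm A.1 : ℝ) ^ 2)⁻¹

/-- The additive character `ẽ(z) = exp(2πi(z/(2i) - z̄/(2i)))`. -/
def eTilde (z : ℂ) : ℂ :=
  Complex.exp (2 * Real.pi * I * (z / (2 * I) - (conj z) / (2 * I)))

/-- The quadratic Gauss sum `g(n) = Σ_{x mod n} (x/n) ẽ(x/n)` (the sum over the finite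
quotient `ℤ[i]/(n)`; each term is independent of the representative chosen). -/
def quadGaussSum (n : GaussianInt) : ℂ :=
  ∑' x : GaussianInt ⧸ Ideal.span {n},
    toComplex (quadSymbol (Quotient.out x) n) * eTilde (toComplex (Quotient.out x) / toComplex n)

/-- The weight `V(ξ) = (1/2πi)∫_{(2)} (Γ(s+1/2)/Γ(1/2)) ξ^{-s} ds/s`, the contour integral
along the vertical line `Re(s) = 2` (parametrized by `s = 2 + iτ`). -/
def Vweight (ξ : ℝ) : ℂ :=
  (2 * Real.pi)⁻¹ * ∫ τ : ℝ,
    Complex.Gamma ((2 + τ * I) + 1 / 2) / Complex.Gamma (1 / 2) *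
      (ξ : ℂ) ^ (-(2 + τ * I)) / (2 + τ * I)

/-! ### The norm and finite quotients of `ℤ[i]` -/

theorem gnorm_mul (a b : GaussianInt) : gnorm (a * b) = gnorm a * gnorm b := by
  simp [gnorm, Zsqrtd.norm_mul, Int.natAbs_mul]

theorem gnorm_eq (a : GaussianInt) : (gnorm a : ℤ) = a.re ^ 2 + a.im ^ 2 := by
  have h : a.norm = a.re ^ 2 + a.im ^ 2 := by rw [Zsqrtd.norm_def]; ring
  rw [gnorm, Int.natAbs_of_nonneg (GaussianInt.norm_nonneg a), h]

theorem gnormR (a : GaussianInt) : (gnorm a : ℝ) = (a.re : ℝ) ^ 2 + (a.im : ℝ) ^ 2 := by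
  have := congrArg (Int.cast : ℤ → ℝ) (gnorm_eq a)
  push_cast at this
  exact this

theorem gnorm_zero : gnorm 0 = 0 := by simp [gnorm]

theorem gnorm_one : gnorm 1 = 1 := by simp [gnorm]

theorem gnorm_eq_zero {a : GaussianInt} : gnorm a = 0 ↔ a = 0 := by
  rw [gnorm, Int.natAbs_eq_zero, GaussianInt.norm_eq_zero]

theorem gnorm_pos {a : GaussianInt} (h : a ≠ 0) : 0 < gnorm a :=
  Nat.pos_of_ne_zero fun h0 => h (gnorm_eq_zero.1 h0)

theorem gnorm_eq_one {a : GaussianInt} : gnorm a = 1 ↔ IsUnit a :=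
  Zsqrtd.norm_eq_one_iff

theorem gnorm_dvd {a b : GaussianInt} (h : a ∣ b) : gnorm a ∣ gnorm b := by
  obtain ⟨c, rfl⟩ := h
  exact ⟨gnorm c, gnorm_mul a c⟩

theorem gnorm_assoc {a b : GaussianInt} (h : Associated a b) : gnorm a = gnorm b :=
  Nat.dvd_antisymm (gnorm_dvd h.dvd) (gnorm_dvd h.symm.dvd)

theorem gnorm_two_le {p : GaussianInt} (hp : Prime p) : 2 ≤ gnorm p := by
  have h0 := gnorm_pos hp.ne_zero
  have h1 : gnorm p ≠ 1 := fun h => hp.not_isUnit (gnorm_eq_one.1 h)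
  omega

/-- The `ℤ`-basis `1, i` of `ℤ[i]`. -/
def giBasis : Module.Basis (Fin 2) ℤ GaussianInt :=
  Module.Basis.ofEquivFun
    { toFun := fun a => ![a.re, a.im]
      invFun := fun v => ⟨v 0, v 1⟩
      map_add' := by intro a b; ext j; fin_cases j <;> simp
      map_smul' := by intro m a; ext j; fin_cases j <;> simp
      left_inv := by intro a; simp
      right_inv := by intro v; ext j; fin_cases j <;> simp }

instance : Module.Free ℤ GaussianInt := Module.Free.of_basis giBasis

instance : Module.Finite ℤ GaussianInt := Module.Finite.of_basis giBasis

theorem algNorm_eq (a : GaussianInt) : Algebra.norm ℤ a = a.re ^ 2 + a.im ^ 2 := by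
  rw [Algebra.norm_eq_matrix_det giBasis, Matrix.det_fin_two]
  simp [Algebra.leftMulMatrix_eq_repr_mul, giBasis, Module.Basis.ofEquivFun]
  ring

theorem card_quot (c : GaussianInt) : Nat.card (GaussianInt ⧸ Ideal.span {c}) = gnorm c := by
  have h := Ideal.absNorm_span_singleton c
  rw [Ideal.absNorm_apply, Submodule.cardQuot_apply] at h
  rw [h, algNorm_eq, ← gnorm_eq]
  simp

theorem finite_quot {c : GaussianInt} (hc : c ≠ 0) : Finite (GaussianInt ⧸ Ideal.span {c}) :=
  Nat.finite_of_card_ne_zero (by rw [card_quot]; exact (gnorm_pos hc).ne')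

theorem quot_eq {c a b : GaussianInt} :
    (Ideal.Quotient.mk (Ideal.span {c}) a = Ideal.Quotient.mk (Ideal.span {c}) b) ↔ c ∣ a - b := by
  rw [Ideal.Quotient.eq, Ideal.mem_span_singleton]

/-- Odd elements: those not divisible by the prime `1 + i` above `2`. -/
def OddG (a : GaussianInt) : Prop := ¬ (1 + gi) ∣ a

theorem oddG_iff (a : GaussianInt) : OddG a ↔ (a.re + a.im) % 2 = 1 := by
  have key : (1 + gi) ∣ a ↔ (a.re + a.im) % 2 = 0 := by
    constructor
    · rintro ⟨b, rfl⟩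
      simp [gi]
      omega
    · intro h
      refine ⟨⟨(a.re + a.im) / 2, (a.im - a.re) / 2⟩, ?_⟩
      ext <;> simp [gi] <;> omega
  rw [OddG, key]; omega

theorem oddG_gnorm {a : GaussianInt} : OddG a ↔ gnorm a % 2 = 1 := by
  rw [oddG_iff]
  have h := gnorm_eq a
  have h1 : (a.re ^ 2 + a.im ^ 2) % 2 = (a.re + a.im) % 2 := by
    rcases Int.emod_two_eq_zero_or_one a.re with h | h <;>
    rcases Int.emod_two_eq_zero_or_one a.im with h' | h' <;>
    simp [pow_two, Int.add_emod, Int.mul_emod, h, h']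
  omega

theorem gnorm_mod_four {a : GaussianInt} (h : OddG a) : gnorm a % 4 = 1 := by
  rw [oddG_iff] at h
  have h2 := gnorm_eq a
  have h1 : (a.re ^ 2 + a.im ^ 2) % 4 = 1 := by
    have : a.re % 4 = 0 ∨ a.re % 4 = 1 ∨ a.re % 4 = 2 ∨ a.re % 4 = 3 := by omega
    have : a.im % 4 = 0 ∨ a.im % 4 = 1 ∨ a.im % 4 = 2 ∨ a.im % 4 = 3 := by omega
    rcases ‹a.re % 4 = 0 ∨ _› with h3 | h3 | h3 | h3 <;>
    rcases ‹a.im % 4 = 0 ∨ _› with h4 | h4 | h4 | h4 <;>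
    first
    | omega
    | simp [pow_two, Int.add_emod, Int.mul_emod, h3, h4]
  omega

theorem prime_one_add_gi : Prime (1 + gi) := by
  rw [← irreducible_iff_prime]
  have hn : gnorm (1 + gi) = 2 := by simp [gnorm, gi, Zsqrtd.norm_def]
  refine ⟨fun h => ?_, fun a b h => ?_⟩
  · rw [← gnorm_eq_one] at h; omega
  · have h2 : gnorm a * gnorm b = 2 := by rw [← gnorm_mul, ← h, hn]
    rcases (Nat.dvd_prime Nat.prime_two).1 ⟨_, h2.symm⟩ with h3 | h3
    · exact Or.inl (gnorm_eq_one.1 h3)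
    · right; rw [h3] at h2; exact gnorm_eq_one.1 (by omega)

theorem oddG_mul {a b : GaussianInt} : OddG (a * b) ↔ OddG a ∧ OddG b := by
  simp only [OddG, prime_one_add_gi.dvd_mul, not_or]

theorem OddG.ne_zero {a : GaussianInt} (h : OddG a) : a ≠ 0 := by
  rintro rfl; exact h (dvd_zero _)

theorem OddG.of_dvd {a b : GaussianInt} (h : OddG b) (hab : a ∣ b) : OddG a :=
  fun h' => h (h'.trans hab)

/-! ### The quadratic residue symbol -/

theorem gi_sq : gi ^ 2 = -1 := by
  rw [pow_two]; ext <;> simp [gi]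

theorem unit_cases {u : GaussianInt} (h : IsUnit u) : u = 1 ∨ u = -1 ∨ u = gi ∨ u = -gi := by
  have h1 := gnorm_eq u
  rw [gnorm_eq_one.2 h] at h1
  obtain ⟨x, y⟩ := u
  simp only at h1
  push_cast at h1
  have hx1 : x ≤ 1 := by nlinarith [sq_nonneg y, sq_nonneg x]
  have hx2 : -1 ≤ x := by nlinarith [sq_nonneg y, sq_nonneg x]
  have hy1 : y ≤ 1 := by nlinarith [sq_nonneg y, sq_nonneg x]
  have hy2 : -1 ≤ y := by nlinarith [sq_nonneg y, sq_nonneg x]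
  interval_cases x <;> interval_cases y <;> simp at h1 <;> simp [gi, Zsqrtd.ext_iff]

theorem unit_sq {u : GaussianInt} (h : IsUnit u) : u ^ 2 = 1 ∨ u ^ 2 = -1 := by
  rcases unit_cases h with rfl | rfl | rfl | rfl <;> simp [gi_sq]

open scoped Classical in
/-- The quadratic residue symbol modulo a prime `p`, as an integer: `0` if `p ∣ a`, `1` if `a` is a
nonzero square modulo `p`, and `-1` otherwise. It is also defined for `p = 1 + i`, where it is the
indicator function of odd elements. -/
def ps (a p : GaussianInt) : ℤ :=
  if p ∣ a then 0 else if ∃ x, p ∣ a - x ^ 2 then 1 else -1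

theorem ps_cases (a p : GaussianInt) : ps a p = 0 ∨ ps a p = 1 ∨ ps a p = -1 := by
  unfold ps; split_ifs <;> simp

theorem ps_eq_zero {a p : GaussianInt} : ps a p = 0 ↔ p ∣ a := by
  unfold ps; split_ifs <;> simp_all

theorem ps_congr {a b p : GaussianInt} (h : p ∣ a - b) : ps a p = ps b p := by
  have h1 : p ∣ a ↔ p ∣ b := by
    constructor
    · intro h'; simpa using dvd_sub h' h
    · intro h'; simpa using dvd_add h' h
  have h2 (x) : p ∣ a - x ↔ p ∣ b - x := by
    constructor
    · intro h'; simpa using dvd_sub h' h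
    · intro h'; simpa using dvd_add h' h
  have h3 : (∃ x, p ∣ a - x ^ 2) ↔ ∃ x, p ∣ b - x ^ 2 := by simp only [h2]
  unfold ps
  split_ifs <;> tauto

theorem ps_assoc {a p q : GaussianInt} (h : Associated p q) : ps a p = ps a q := by
  have h1 (x : GaussianInt) : p ∣ x ↔ q ∣ x := h.dvd_iff_dvd_left
  have h2 : (∃ x, p ∣ a - x ^ 2) ↔ ∃ x, q ∣ a - x ^ 2 := by simp only [h1]
  have h3 := h1 a
  unfold ps
  split_ifs <;> tauto

/-- The residue field of a prime, packaged together with the reduction map. -/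
theorem exists_resField {p : GaussianInt} (hp : Prime p) :
    ∃ (F : Type) (_ : Field F) (_ : Fintype F) (_ : DecidableEq F) (φ : GaussianInt →+* F),
      Function.Surjective φ ∧ (∀ a, φ a = 0 ↔ p ∣ a) ∧ Fintype.card F = gnorm p := by
  classical
  have : (Ideal.span {p}).IsPrime := (Ideal.span_singleton_prime hp.ne_zero).2 hp
  have hm : (Ideal.span {p}).IsMaximal :=
    this.isMaximal (by simpa [Ideal.span_singleton_eq_bot] using hp.ne_zero)
  have hf := finite_quot hp.ne_zero
  refine ⟨GaussianInt ⧸ Ideal.span {p}, Ideal.Quotient.field _, Fintype.ofFinite _, inferInstance,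
    Ideal.Quotient.mk _, Ideal.Quotient.mk_surjective, fun a => ?_, ?_⟩
  · rw [Ideal.Quotient.eq_zero_iff_mem, Ideal.mem_span_singleton]
  · rw [Fintype.card_eq_nat_card]; exact card_quot p

theorem ps_eq_quadraticChar {p : GaussianInt} {F : Type} [Field F] [Fintype F] [DecidableEq F]
    (φ : GaussianInt →+* F) (hs : Function.Surjective φ) (h0 : ∀ a, φ a = 0 ↔ p ∣ a)
    (a : GaussianInt) : ps a p = quadraticChar F (φ a) := by
  rw [quadraticChar_apply, quadraticCharFun, ps]
  have : (∃ x, p ∣ a - x ^ 2) ↔ IsSquare (φ a) := by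
    constructor
    · rintro ⟨x, hx⟩
      refine ⟨φ x, ?_⟩
      rw [← h0, map_sub, sub_eq_zero] at hx
      rw [hx, map_pow, pow_two]
    · rintro ⟨y, hy⟩
      obtain ⟨x, rfl⟩ := hs y
      refine ⟨x, ?_⟩
      rw [← h0, map_sub, hy, map_pow, pow_two, sub_self]
  have h3 := h0 a
  split_ifs <;> tauto

theorem not_dvd_two {p : GaussianInt} (hp : Prime p) (ho : OddG p) : ¬ p ∣ 2 := by
  intro h
  have h1 : p ∣ (1 + gi) ^ 2 := by
    have : (1 + gi) ^ 2 = 2 * gi := by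
      have := gi_sq
      linear_combination this
    rw [this]; exact h.mul_right _
  have h2 := hp.dvd_of_dvd_pow h1
  exact ho ((hp.associated_of_dvd prime_one_add_gi h2).symm.dvd)

theorem ringChar_ne {p : GaussianInt} (hp : Prime p) (ho : OddG p) {F : Type} [Field F]
    (φ : GaussianInt →+* F) (h0 : ∀ a, φ a = 0 ↔ p ∣ a) : ringChar F ≠ 2 := by
  intro h
  apply not_dvd_two hp ho
  rw [← h0]
  have := ringChar.Nat.cast_ringChar (R := F)
  rw [h] at this
  rw [map_ofNat]
  simpa using this

theorem ps_mul {p : GaussianInt} (hp : Prime p) (a b : GaussianInt) :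
    ps (a * b) p = ps a p * ps b p := by
  obtain ⟨F, _, _, _, φ, hs, h0, -⟩ := exists_resField hp
  simp only [ps_eq_quadraticChar φ hs h0, map_mul]

theorem ps_sq {p a : GaussianInt} (h : ¬ p ∣ a) : ps a p ^ 2 = 1 := by
  have := ps_eq_zero.not.2 h
  rcases ps_cases a p with h | h | h <;> simp_all

theorem ps_pow_two {p a : GaussianInt} (hp : Prime p) (h : ¬ p ∣ a) : ps (a ^ 2) p = 1 := by
  rw [pow_two, ps_mul hp, ← pow_two, ps_sq h]

theorem ps_one {p : GaussianInt} (hp : Prime p) : ps 1 p = 1 := by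
  simpa using ps_pow_two (a := 1) hp hp.not_dvd_one

theorem ps_neg {p : GaussianInt} (hp : Prime p) (a : GaussianInt) : ps (-a) p = ps a p := by
  have hg : ¬ p ∣ gi := fun h => hp.not_dvd_one (by
    have := h.mul_right (-gi)
    rwa [mul_neg, ← pow_two, gi_sq, neg_neg] at this)
  have h1 := ps_pow_two hp hg
  rw [← neg_one_mul, ps_mul hp, ← gi_sq, h1, one_mul]

theorem exists_ps_neg {p : GaussianInt} (hp : Prime p) (ho : OddG p) : ∃ u, ps u p = -1 := by
  obtain ⟨F, _, _, _, φ, hs, h0, -⟩ := exists_resField hp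
  obtain ⟨y, hy⟩ := quadraticChar_exists_neg_one (ringChar_ne hp ho φ h0)
  obtain ⟨u, rfl⟩ := hs y
  exact ⟨u, by rw [ps_eq_quadraticChar φ hs h0, hy]⟩

/-- Euler's criterion. -/
theorem ps_euler {p : GaussianInt} (hp : Prime p) (ho : OddG p) (a : GaussianInt) :
    p ∣ a ^ ((gnorm p - 1) / 2) - (ps a p : GaussianInt) := by
  obtain ⟨F, _, _, _, φ, hs, h0, hc⟩ := exists_resField hp
  have h := quadraticChar_eq_pow_of_char_ne_two' (ringChar_ne hp ho φ h0) (φ a)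
  rw [← h0, map_sub, map_pow, map_intCast, ps_eq_quadraticChar φ hs h0, h, hc]
  have := oddG_gnorm.1 ho
  rw [show (gnorm p - 1) / 2 = gnorm p / 2 by omega, sub_self]

/-- The symbol is determined by its residue class. -/
theorem ps_unique {p : GaussianInt} (hp : Prime p) (ho : OddG p) {a : GaussianInt} {m : ℤ}
    (hm : m = 0 ∨ m = 1 ∨ m = -1) (h : p ∣ a ^ ((gnorm p - 1) / 2) - (m : GaussianInt)) :
    ps a p = m := by
  have h1 := dvd_sub h (ps_euler hp ho a)
  rw [sub_sub_sub_cancel_left] at h1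
  have h2 := not_dvd_two hp ho
  have h3 := hp.not_dvd_one
  rcases ps_cases a p with h' | h' | h' <;> rcases hm with rfl | rfl | rfl <;> rw [h'] at h1 ⊢ <;>
    norm_num at h1 <;> first | exact absurd h1 h2 | exact absurd h1 h3

theorem quarticSymbolPrime_sq {p : GaussianInt} (hp : Prime p) (ho : OddG p) (a : GaussianInt) :
    quarticSymbolPrime a p ^ 2 = (ps a p : GaussianInt) := by
  have h4 := gnorm_mod_four ho
  have h2 := gnorm_two_le hp
  by_cases ha : p ∣ a
  · rw [ps_eq_zero.2 ha, quarticSymbolPrime, dif_neg]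
    · simp
    · rintro ⟨u, hu, h⟩
      have h1 : p ∣ a ^ ((gnorm p - 1) / 4) := dvd_pow ha (by omega)
      have h3 := dvd_sub h1 h
      rw [sub_sub_cancel] at h3
      exact hp.not_isUnit (isUnit_of_dvd_unit h3 hu)
  · have hex : ∃ u : GaussianInt, IsUnit u ∧ p ∣ a ^ ((gnorm p - 1) / 4) - u := by
      have hgu : IsUnit gi := IsUnit.of_mul_eq_one (-gi) (by
        rw [mul_neg, ← pow_two, gi_sq, neg_neg])
      have h1 := ps_euler hp ho a
      rw [show (gnorm p - 1) / 2 = (gnorm p - 1) / 4 * 2 by omega, pow_mul] at h1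
      set b := a ^ ((gnorm p - 1) / 4)
      rcases ps_cases a p with h | h | h
      · exact absurd (ps_eq_zero.1 h) ha
      · rw [h] at h1
        have h5 : p ∣ (b - 1) * (b - (-1)) := by
          convert! h1 using 1; push_cast; ring
        rcases hp.dvd_or_dvd h5 with h6 | h6
        · exact ⟨1, isUnit_one, h6⟩
        · exact ⟨-1, isUnit_one.neg, h6⟩
      · rw [h] at h1
        have h5 : p ∣ (b - gi) * (b - (-gi)) := by
          convert! h1 using 1; push_cast; linear_combination -gi_sq
        rcases hp.dvd_or_dvd h5 with h6 | h6
        · exact ⟨gi, hgu, h6⟩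
        · exact ⟨-gi, hgu.neg, h6⟩
    rw [quarticSymbolPrime, dif_pos hex]
    obtain ⟨hu, hd⟩ := hex.choose_spec
    set u := hex.choose
    have h5 : p ∣ a ^ ((gnorm p - 1) / 2) - u ^ 2 := by
      rw [show (gnorm p - 1) / 2 = (gnorm p - 1) / 4 * 2 by omega, pow_mul]
      exact hd.trans (sub_dvd_pow_sub_pow _ _ 2)
    rcases unit_sq hu with h6 | h6
    · rw [ps_unique hp ho (m := 1) (by simp) (by rw [h6] at h5; simpa using h5), h6]; simp
    · rw [ps_unique hp ho (m := -1) (by simp) (by rw [h6] at h5; simpa using h5), h6]; simp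

/-- The quadratic residue symbol `(a/n)`, as an integer. -/
def sym (a n : GaussianInt) : ℤ :=
  ((UniqueFactorizationMonoid.factors n).map fun p => ps a p).prod

theorem map_ps_prod_of_rel {a : GaussianInt} {s t : Multiset GaussianInt}
    (h : Multiset.Rel Associated s t) :
    (s.map fun p => ps a p).prod = (t.map fun p => ps a p).prod := by
  induction h with
  | zero => rfl
  | cons hab _ ih => simp [ps_assoc hab, ih]

/-- The symbol may be computed from any factorization into primes, up to a unit. -/
theorem sym_eq_of_prod {a n : GaussianInt} {s : Multiset GaussianInt} (hs : ∀ p ∈ s, Prime p)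
    (h : Associated s.prod n) : sym a n = (s.map fun p => ps a p).prod := by
  have hn : n ≠ 0 := by
    intro h0
    rw [h0, associated_zero_iff_eq_zero, Multiset.prod_eq_zero_iff] at h
    exact (hs 0 h).ne_zero rfl
  apply map_ps_prod_of_rel
  exact UniqueFactorizationMonoid.factors_unique
    UniqueFactorizationMonoid.irreducible_of_factor (fun p hp => (hs p hp).irreducible)
    ((UniqueFactorizationMonoid.factors_prod hn).trans h.symm)

theorem exists_primes {n : GaussianInt} (hn : n ≠ 0) :
    ∃ s : Multiset GaussianInt, (∀ p ∈ s, Prime p) ∧ Associated s.prod n :=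
  ⟨_, UniqueFactorizationMonoid.prime_of_factor, UniqueFactorizationMonoid.factors_prod hn⟩

theorem sym_assoc {a n m : GaussianInt} (hn : n ≠ 0) (h : Associated n m) :
    sym a n = sym a m := by
  obtain ⟨s, hs, h1⟩ := exists_primes hn
  rw [sym_eq_of_prod hs h1, sym_eq_of_prod hs (h1.trans h)]

theorem sym_mul_right {a n m : GaussianInt} (hn : n ≠ 0) (hm : m ≠ 0) :
    sym a (n * m) = sym a n * sym a m := by
  obtain ⟨s, hs, h1⟩ := exists_primes hn
  obtain ⟨t, ht, h2⟩ := exists_primes hm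
  rw [sym_eq_of_prod hs h1, sym_eq_of_prod ht h2, sym_eq_of_prod (s := s + t)]
  · simp
  · intro p hp
    rcases Multiset.mem_add.1 hp with h | h
    · exact hs p h
    · exact ht p h
  · rw [Multiset.prod_add]; exact h1.mul_mul h2

theorem sym_prime {a p : GaussianInt} (hp : Prime p) : sym a p = ps a p := by
  rw [sym_eq_of_prod (s := {p}) (by simpa using hp) (by simp)]
  simp

theorem sym_unit {a n : GaussianInt} (hn : IsUnit n) : sym a n = 1 := by
  rw [sym_eq_of_prod (s := 0) (by simp) (by simpa using (associated_one_iff_isUnit.2 hn).symm)]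
  simp

theorem sym_mul_left {n : GaussianInt} (hn : n ≠ 0) (a b : GaussianInt) :
    sym (a * b) n = sym a n * sym b n := by
  obtain ⟨s, hs, h1⟩ := exists_primes hn
  simp only [sym_eq_of_prod hs h1]
  rw [← Multiset.prod_map_mul]
  congr 1
  exact Multiset.map_congr rfl fun p hp => ps_mul (hs p hp) a b

theorem sym_one_left {n : GaussianInt} (hn : n ≠ 0) : sym 1 n = 1 := by
  obtain ⟨s, hs, h1⟩ := exists_primes hn
  rw [sym_eq_of_prod hs h1]
  exact Multiset.prod_eq_one fun x hx => by
    obtain ⟨p, hp, rfl⟩ := Multiset.mem_map.1 hx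
    exact ps_one (hs p hp)

theorem sym_congr {a b n : GaussianInt} (hn : n ≠ 0) (h : n ∣ a - b) : sym a n = sym b n := by
  obtain ⟨s, hs, h1⟩ := exists_primes hn
  rw [sym_eq_of_prod hs h1, sym_eq_of_prod hs h1]
  congr 1
  exact Multiset.map_congr rfl fun p hp =>
    ps_congr (((Multiset.dvd_prod hp).trans h1.dvd).trans h)

theorem sym_cases (a n : GaussianInt) : sym a n = 0 ∨ sym a n = 1 ∨ sym a n = -1 := by
  unfold sym
  induction UniqueFactorizationMonoid.factors n using Multiset.induction_on with
  | empty => simp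
  | cons p s ih =>
    rw [Multiset.map_cons, Multiset.prod_cons]
    rcases ps_cases a p with h | h | h <;> rcases ih with h' | h' | h' <;> simp [h, h']

theorem sym_eq_zero {a n : GaussianInt} (hn : n ≠ 0) : sym a n = 0 ↔ ∃ p, Prime p ∧ p ∣ n ∧ p ∣ a := by
  constructor
  · intro h
    rw [sym, Multiset.prod_eq_zero_iff, Multiset.mem_map] at h
    obtain ⟨p, hp, h⟩ := h
    exact ⟨p, UniqueFactorizationMonoid.prime_of_factor _ hp,
      UniqueFactorizationMonoid.dvd_of_mem_factors hp, ps_eq_zero.1 h⟩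
  · rintro ⟨p, hp, ⟨m, rfl⟩, h⟩
    have hm : m ≠ 0 := right_ne_zero_of_mul hn
    rw [sym_mul_right hp.ne_zero hm, sym_prime hp, ps_eq_zero.2 h, zero_mul]

theorem quadSymbol_eq {n : GaussianInt} (ho : OddG n) (a : GaussianInt) :
    quadSymbol a n = (sym a n : GaussianInt) := by
  rw [quadSymbol, quarticSymbol, sym, ← Multiset.prod_map_pow, ← eq_intCast (Int.castRingHom _),
    map_multiset_prod, Multiset.map_map]
  congr 1
  refine Multiset.map_congr rfl fun p hp => ?_
  exact quarticSymbolPrime_sq (UniqueFactorizationMonoid.prime_of_factor _ hp)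
    (ho.of_dvd (UniqueFactorizationMonoid.dvd_of_mem_factors hp)) a

section

/-! ### Quadratic reciprocity in `ℤ[i]` -/

open scoped NumberTheorySymbols

/-- Odd elements normalized to have odd real part and even imaginary part. -/
def EvenIm (z : GaussianInt) : Prop := z.re % 2 = 1 ∧ z.im % 2 = 0

theorem EvenIm.oddG {z : GaussianInt} (h : EvenIm z) : OddG z := by
  rw [oddG_iff]; have := h.1; have := h.2; omega

theorem EvenIm.mul {z w : GaussianInt} (hz : EvenIm z) (hw : EvenIm w) : EvenIm (z * w) := by
  obtain ⟨h1, h2⟩ := hz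
  obtain ⟨h3, h4⟩ := hw
  constructor <;> simp [Int.add_emod, Int.mul_emod, h1, h2, h3, h4]

theorem exists_evenIm {z : GaussianInt} (h : OddG z) : ∃ w, Associated z w ∧ EvenIm w := by
  rw [oddG_iff] at h
  rcases Int.emod_two_eq_zero_or_one z.im with h1 | h1
  · exact ⟨z, Associated.refl _, by constructor <;> omega⟩
  · have hu : IsUnit gi := IsUnit.of_mul_eq_one (-gi) (by
      rw [mul_neg, ← pow_two, gi_sq, neg_neg])
    refine ⟨z * gi, ⟨hu.unit, rfl⟩, ?_⟩
    constructor <;> simp [gi] <;> omega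

theorem evenIm_assoc {z w : GaussianInt} (hz : EvenIm z) (hw : EvenIm w) (h : Associated z w) :
    w = z ∨ w = -z := by
  obtain ⟨u, rfl⟩ := h
  obtain ⟨h1, h2⟩ := hz
  obtain ⟨h3, h4⟩ := hw
  rcases unit_cases u.isUnit with h | h | h | h <;> rw [h] at h3 h4 ⊢
  · simp
  · simp
  · simp [gi] at h3 h4; omega
  · simp [gi] at h3 h4; omega

/-- The instance of rational reciprocity behind reciprocity in `ℤ[i]`: an odd integer `m` has
trivial Jacobi symbol modulo a coprime sum of two squares `m² + k²`. -/
theorem jacobi_sum_sq {m k : ℤ} {P : ℕ} (hP : (P : ℤ) = m ^ 2 + k ^ 2) (hm : m % 2 = 1)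
    (hP4 : P % 4 = 1) (hg : m.gcd P = 1) : J(m | P) = 1 := by
  have hodd : Odd P := Nat.odd_iff.2 (by omega)
  have hmo : Odd m.natAbs := Int.natAbs_odd.2 (Int.odd_iff.2 hm)
  have h1 : J(m | P) = J(m.natAbs | P) := by
    rcases Int.natAbs_eq m with h | h
    · rw [← h]
    · nth_rewrite 1 [h]
      rw [jacobiSym.neg _ hodd, ZMod.χ₄_nat_one_mod_four hP4, one_mul]
  have hkm : k.gcd (m.natAbs : ℕ) = 1 := by
    rw [Int.gcd, Int.natAbs_natCast]
    have h2 : IsCoprime m (P : ℤ) := Int.isCoprime_iff_gcd_eq_one.2 hg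
    rw [hP, pow_two m] at h2
    have h3 := IsCoprime.of_mul_add_left_right h2
    exact Int.isCoprime_iff_gcd_eq_one.1 ((IsCoprime.pow_right_iff two_pos).1 h3).symm
  rw [h1, jacobiSym.quadratic_reciprocity_one_mod_four' hmo hP4, hP]
  rw [jacobiSym.mod_left' (a₂ := k ^ 2), jacobiSym.sq_one' hkm]
  apply Int.ModEq.symm
  rw [Int.modEq_iff_dvd, add_sub_cancel_right, Int.natAbs_dvd]
  exact dvd_pow_self _ two_ne_zero

theorem int_dvd_gi {m n : ℤ} (h : m ∣ n) : (m : GaussianInt) ∣ (n : GaussianInt) := by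
  exact_mod_cast (Int.cast_dvd_cast (α := GaussianInt) _ _ h)

theorem dvd_gnorm (z : GaussianInt) : z ∣ (gnorm z : GaussianInt) := by
  refine ⟨star z, ?_⟩
  rw [← Zsqrtd.norm_eq_mul_conj]
  have : ((gnorm z : ℕ) : ℤ) = z.norm := Int.natAbs_of_nonneg (GaussianInt.norm_nonneg z)
  rw [← this]
  push_cast
  rfl

theorem gnorm_natCast (n : ℕ) : gnorm (n : GaussianInt) = n ^ 2 := by
  have := gnorm_eq (n : GaussianInt)
  simp at this
  exact_mod_cast this

/-- An odd prime of `ℤ[i]` either has prime norm (split) or is a rational prime up to sign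
(inert). -/
theorem prime_class {p : GaussianInt} (hp : Prime p) (hE : EvenIm p) :
    (gnorm p).Prime ∨ ∃ q : ℕ, q.Prime ∧ (p = q ∨ p = -q) := by
  have h1 : p ∣ (gnorm p : GaussianInt) := dvd_gnorm p
  have h0 : gnorm p ≠ 0 := (gnorm_pos hp.ne_zero).ne'
  have h2 : ∃ q : ℕ, q.Prime ∧ p ∣ (q : GaussianInt) := by
    rw [← Nat.prod_primeFactorsList h0, Nat.cast_list_prod] at h1
    obtain ⟨x, hx, hpx⟩ := hp.dvd_prod_iff.1 h1
    obtain ⟨q, hq, rfl⟩ := List.mem_map.1 hx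
    exact ⟨q, Nat.prime_of_mem_primeFactorsList hq, hpx⟩
  obtain ⟨q, hq, w, hw⟩ := h2
  have h3 : gnorm p * gnorm w = q ^ 2 := by rw [← gnorm_mul, ← hw, gnorm_natCast]
  obtain ⟨i, hi, h4⟩ := (Nat.dvd_prime_pow hq).1 ⟨_, h3.symm⟩
  have h5 := gnorm_two_le hp
  interval_cases i
  · simp at h4; omega
  · left; rw [h4, pow_one]; exact hq
  · right
    refine ⟨q, hq, ?_⟩
    have h6 : gnorm w = 1 := by
      rw [h4] at h3
      exact Nat.eq_of_mul_eq_mul_left (pow_pos hq.pos 2) (by rw [h3, mul_one])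
    have hwu := gnorm_eq_one.1 h6
    obtain ⟨h7, h8⟩ := hE
    have hre := congrArg Zsqrtd.re hw
    have him := congrArg Zsqrtd.im hw
    rcases unit_cases hwu with h | h | h | h
    · left; rw [hw, h, mul_one]
    · right; rw [hw, h]; simp
    · rw [h] at hre him; simp [gi] at hre him; omega
    · rw [h] at hre him; simp [gi] at hre him; omega

theorem legendre_cases (m : ℤ) (n : ℕ) : J(m | n) = 0 ∨ J(m | n) = 1 ∨ J(m | n) = -1 :=
  jacobiSym.trichotomy m n

theorem euler_int {q : ℕ} (hq : q.Prime) (m : ℤ) (h2 : q % 2 = 1) :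
    (q : ℤ) ∣ m ^ ((q - 1) / 2) - J(m | q) := by
  have : Fact q.Prime := ⟨hq⟩
  rw [← ZMod.intCast_zmod_eq_zero_iff_dvd] 
  rw [← jacobiSym.legendreSym.to_jacobiSym]
  push_cast
  rw [legendreSym.eq_pow, show (q - 1) / 2 = q / 2 by omega, sub_self]

theorem ps_int {p : GaussianInt} (hp : Prime p) (ho : OddG p) (hn : (gnorm p).Prime) (m : ℤ) :
    ps m p = J(m | gnorm p) := by
  refine ps_unique hp ho (legendre_cases _ _) ?_
  have h1 := int_dvd_gi (euler_int hn m (oddG_gnorm.1 ho))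
  have h2 := (dvd_gnorm p).trans (by simpa using h1)
  simpa using h2

/-- The symbol modulo a split prime `p` is a Jacobi symbol modulo `N(p)`: `Re p` is a
quadratic residue modulo `p`, and `a * Re p` is congruent to a rational integer. -/
theorem ps_split {p : GaussianInt} (hp : Prime p) (hE : EvenIm p) (hn : (gnorm p).Prime)
    (a : GaussianInt) : ps a p = J(a.re * p.re + a.im * p.im | gnorm p) := by
  have hc : ps (p.re : GaussianInt) p = 1 := by
    rw [ps_int hp hE.oddG hn]
    refine jacobi_sum_sq (gnorm_eq p) hE.1 (gnorm_mod_four hE.oddG) ?_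
    rw [← Int.isCoprime_iff_gcd_eq_one, isCoprime_comm, (Nat.prime_iff_prime_int.1 hn).coprime_iff_not_dvd]
    intro h
    have h1 : (gnorm p : ℤ) ∣ p.im ^ 2 := by
      have h2 : (gnorm p : ℤ) ∣ p.re ^ 2 + p.im ^ 2 := by rw [← gnorm_eq p]
      exact (dvd_add_right (dvd_pow h two_ne_zero)).1 h2
    have h2 := (Nat.prime_iff_prime_int.1 hn).dvd_of_dvd_pow h1
    obtain ⟨x, hx⟩ := h
    obtain ⟨y, hy⟩ := h2
    have h3 := gnorm_eq p
    have hp2 := hn.two_le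
    have hpos : (0 : ℤ) < gnorm p := by exact_mod_cast hn.pos
    rw [hx, hy] at h3
    have h4 : (1 : ℤ) = gnorm p * (x ^ 2 + y ^ 2) := by
      apply mul_left_cancel₀ hpos.ne'
      linear_combination h3
    have h5 : (gnorm p : ℤ) ∣ 1 := ⟨_, h4⟩
    have := Int.le_of_dvd one_pos h5
    omega
  have h1 : ps a p = ps (p.re * a) p := by rw [ps_mul hp, hc, one_mul]
  rw [← ps_int hp hE.oddG hn, h1]
  apply ps_congr
  refine ⟨a.im * gi, ?_⟩
  ext <;> simp [gi] <;> ring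

/-- Conjugation is the Frobenius map modulo an inert prime. -/
theorem frob {q : ℕ} (hq : q.Prime) (h4 : q % 4 = 3) (a : GaussianInt) :
    (q : GaussianInt) ∣ a ^ q - star a := by
  have : Fact q.Prime := ⟨hq⟩
  have fl (m : ℤ) : (q : GaussianInt) ∣ (m : GaussianInt) ^ q - m := by
    have : (q : ℤ) ∣ m ^ q - m := by
      rw [← ZMod.intCast_zmod_eq_zero_iff_dvd]; push_cast; rw [ZMod.pow_card, sub_self]
    simpa using int_dvd_gi this
  have ha : a = (a.re : GaussianInt) + (a.im : GaussianInt) * gi := by ext <;> simp [gi]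
  have hs : star a = (a.re : GaussianInt) - (a.im : GaussianInt) * gi := by ext <;> simp [gi]
  obtain ⟨r, hr⟩ := exists_add_pow_prime_eq hq (a.re : GaussianInt) (a.im * gi)
  have hg : gi ^ q = -gi := by
    have e1 : gi ^ 4 = 1 := by rw [show gi ^ 4 = (gi ^ 2) ^ 2 by ring, gi_sq]; ring
    have e2 : gi ^ 3 = -gi := by rw [pow_succ, gi_sq]; ring
    rw [← Nat.div_add_mod q 4, h4, pow_add, pow_mul, e1, e2, one_pow, one_mul]
  rw [hs]
  nth_rewrite 1 [ha]
  rw [hr, mul_pow, hg]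
  obtain ⟨x, hx⟩ := fl a.re
  obtain ⟨y, hy⟩ := fl a.im
  exact ⟨x - y * gi + a.re * (a.im * gi) * r, by linear_combination hx - gi * hy⟩

/-- The symbol modulo an inert prime `q` is a Legendre symbol of the norm, because
`a ^ ((q ^ 2 - 1) / 2) = (a ^ (q + 1)) ^ ((q - 1) / 2)` and `a ^ (q + 1) ≡ N(a)`. -/
theorem ps_inert {q : ℕ} (hq : q.Prime) (hp : Prime (q : GaussianInt)) (ho : q % 2 = 1)
    (a : GaussianInt) : ps a q = J(gnorm a | q) := by
  have hf : Fact q.Prime := ⟨hq⟩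
  have h4 : q % 4 = 3 := (GaussianInt.prime_iff_mod_four_eq_three_of_nat_prime q).1 hp
  have hodd : OddG (q : GaussianInt) := by rw [oddG_iff]; simp; omega
  refine ps_unique hp hodd (legendre_cases _ _) ?_
  rw [gnorm_natCast]
  have h1 : (q ^ 2 - 1) / 2 = (q + 1) * ((q - 1) / 2) := by
    obtain ⟨k, rfl⟩ : ∃ k, q = 2 * k + 1 := ⟨q / 2, by omega⟩
    have : (2 * k + 1) ^ 2 - 1 = 2 * ((2 * k + 1 + 1) * k) := by
      rw [show (2 * k + 1) ^ 2 = 2 * ((2 * k + 1 + 1) * k) + 1 by ring]; simp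
    rw [this, show 2 * k + 1 - 1 = 2 * k by simp]
    simp
  rw [h1, pow_mul]
  have h2 : (q : GaussianInt) ∣ a ^ (q + 1) - ((gnorm a : ℤ) : GaussianInt) := by
    obtain ⟨r, hr⟩ := frob hq h4 a
    have h3 : ((gnorm a : ℤ) : GaussianInt) = a * star a := by
      rw [← Zsqrtd.norm_eq_mul_conj]
      congr 1
      exact Int.natAbs_of_nonneg (GaussianInt.norm_nonneg a)
    rw [h3]
    exact ⟨r * a, by rw [pow_succ]; linear_combination a * hr⟩
  have h3 := h2.trans (sub_dvd_pow_sub_pow _ _ ((q - 1) / 2))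
  have h5 := int_dvd_gi (euler_int hq (gnorm a) ho)
  have h6 := dvd_add h3 (by simpa using h5)
  simpa using h6

/-- Quadratic reciprocity for primes, by cases on whether each of them is split or inert. -/
theorem ps_recip {p l : GaussianInt} (hp : Prime p) (hl : Prime l) (hpE : EvenIm p)
    (hlE : EvenIm l) : ps l p = ps p l := by
  by_cases hdvd : p ∣ l
  · rw [ps_eq_zero.2 hdvd, ps_eq_zero.2 (hp.associated_of_dvd hl hdvd).symm.dvd]
  have hdvd' : ¬ l ∣ p := fun h => hdvd (hl.associated_of_dvd hp h).symm.dvd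
  have hoq {q : ℕ} {z : GaussianInt} (hz : EvenIm z) (h : z = q ∨ z = -q) : q % 2 = 1 := by
    have h1 := hz.1
    rcases h with rfl | rfl <;> simp at h1 <;> omega
  have hpq {q : ℕ} {z : GaussianInt} (hz : Prime z) (h : z = q ∨ z = -q) :
      Prime (q : GaussianInt) := by
    rcases h with rfl | rfl
    · exact hz
    · simpa using hz.neg
  have hr {q : ℕ} {z w : GaussianInt} (h : z = q ∨ z = -q) : ps w z = ps w q := by
    rcases h with rfl | rfl
    · rfl
    · exact ps_assoc (Associated.neg_left (Associated.refl _))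
  have hln {q : ℕ} {z w : GaussianInt} (hw : Prime w) (h : z = q ∨ z = -q) :
      ps z w = ps (q : GaussianInt) w := by
    rcases h with rfl | rfl
    · rfl
    · exact ps_neg hw _
  have mixed {q : ℕ} {z w : GaussianInt} (hz : Prime z) (hw : Prime w) (hzE : EvenIm z)
      (hwE : EvenIm w) (hn : (gnorm w).Prime) (hq : q.Prime) (h : z = q ∨ z = -q) :
      ps w z = ps z w := by
    rw [hr h, hln hw h, ps_inert hq (hpq hz h) (hoq hzE h)]
    have := ps_int hw hwE.oddG hn q
    rw [Int.cast_natCast] at this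
    rw [this]
    exact jacobiSym.quadratic_reciprocity_one_mod_four (gnorm_mod_four hwE.oddG)
      (Nat.odd_iff.2 (hoq hzE h))
  rcases prime_class hp hpE with h1 | ⟨q, hq, h1⟩ <;>
  rcases prime_class hl hlE with h2 | ⟨r, hr', h2⟩
  · have e1 := ps_split hp hpE h1 l
    have e2 := ps_split hl hlE h2 p
    rw [show p.re * l.re + p.im * l.im = l.re * p.re + l.im * p.im by ring] at e2
    set m := l.re * p.re + l.im * p.im with hm
    have hJ : J(m | gnorm p * gnorm l) = 1 := by
      refine jacobi_sum_sq (k := l.re * p.im - l.im * p.re) ?_ ?_ ?_ ?_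
      · push_cast; rw [gnorm_eq, gnorm_eq]; ring
      · obtain ⟨h3, h4⟩ := hpE
        obtain ⟨h5, h6⟩ := hlE
        simp [hm, Int.add_emod, Int.mul_emod, h3, h4, h5, h6]
      · rw [Nat.mul_mod, gnorm_mod_four hpE.oddG, gnorm_mod_four hlE.oddG]
      · by_contra hne
        have : J(m | gnorm p * gnorm l) = 0 := by
          rw [jacobiSym.eq_zero_iff]
          exact ⟨mul_ne_zero h1.ne_zero h2.ne_zero, hne⟩
        rw [jacobiSym.mul_right' _ h1.ne_zero h2.ne_zero, ← e1, ← e2, mul_eq_zero, ps_eq_zero,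
          ps_eq_zero] at this
        tauto
    rw [jacobiSym.mul_right' _ h1.ne_zero h2.ne_zero, ← e1, ← e2] at hJ
    rcases ps_cases l p with h | h | h <;> rcases ps_cases p l with h' | h' | h' <;>
      rw [h, h'] at hJ ⊢ <;> norm_num at hJ
  · exact (mixed hl hp hlE hpE h1 hr' h2).symm
  · exact mixed hp hl hpE hlE h2 hq h1
  · have sq_one {q r : ℕ} (hq : Prime (q : GaussianInt)) (hqq : q.Prime) (hqo : q % 2 = 1)
        (h : ¬ (q : GaussianInt) ∣ r) : ps (r : GaussianInt) q = 1 := by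
      have h0 := ps_eq_zero.not.2 h
      rw [ps_inert hqq hq hqo, gnorm_natCast] at h0 ⊢
      push_cast at h0 ⊢
      rw [jacobiSym.pow_left] at h0 ⊢
      rcases legendre_cases r q with h | h | h <;> simp_all
    have hn {z w : GaussianInt} {q r : ℕ} (h1 : z = q ∨ z = -q) (h2 : w = r ∨ w = -r)
        (h : ¬ z ∣ w) : ¬ (q : GaussianInt) ∣ r := by
      rcases h1 with rfl | rfl <;> rcases h2 with rfl | rfl <;> simpa using h
    rw [hr h1, hln (hpq hp h1) h2, hr h2, hln (hpq hl h2) h1,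
      sq_one (hpq hp h1) hq (hoq hpE h1) (hn h1 h2 hdvd),
      sq_one (hpq hl h2) hr' (hoq hlE h2) (hn h2 h1 hdvd')]

theorem exists_evenIm_primes {n : GaussianInt} (hn : OddG n) :
    ∃ s : Multiset GaussianInt, (∀ p ∈ s, Prime p ∧ EvenIm p) ∧ Associated s.prod n := by
  obtain ⟨s, hs, h⟩ := exists_primes hn.ne_zero
  have ho : OddG s.prod := hn.of_dvd h.dvd
  suffices H : ∃ t : Multiset GaussianInt, (∀ p ∈ t, Prime p ∧ EvenIm p) ∧
      Associated t.prod s.prod by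
    obtain ⟨t, h1, h2⟩ := H
    exact ⟨t, h1, h2.trans h⟩
  clear h
  induction s using Multiset.induction_on with
  | empty => exact ⟨0, by simp, by simp⟩
  | cons p s ih =>
    rw [Multiset.prod_cons, oddG_mul] at ho
    obtain ⟨t, h1, h2⟩ := ih (fun q hq => hs q (Multiset.mem_cons_of_mem hq)) ho.2
    obtain ⟨w, hw, hwE⟩ := exists_evenIm ho.1
    refine ⟨w ::ₘ t, ?_, ?_⟩
    · intro q hq
      rcases Multiset.mem_cons.1 hq with rfl | hq
      · exact ⟨hw.prime (hs p (Multiset.mem_cons_self _ _)), hwE⟩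
      · exact h1 q hq
    · rw [Multiset.prod_cons, Multiset.prod_cons]
      exact hw.symm.mul_mul h2

theorem evenIm_prod {s : Multiset GaussianInt} (h : ∀ p ∈ s, EvenIm p) : EvenIm s.prod := by
  induction s using Multiset.induction_on with
  | empty => simp [EvenIm]
  | cons p s ih =>
    rw [Multiset.prod_cons]
    exact (h p (Multiset.mem_cons_self _ _)).mul
      (ih fun q hq => h q (Multiset.mem_cons_of_mem hq))

theorem ps_prod {p : GaussianInt} (hp : Prime p) (s : Multiset GaussianInt) :
    ps s.prod p = (s.map fun l => ps l p).prod := by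
  induction s using Multiset.induction_on with
  | empty => simp [ps_one hp]
  | cons l s ih => rw [Multiset.prod_cons, ps_mul hp, ih, Multiset.map_cons, Multiset.prod_cons]

/-- Quadratic reciprocity for elements with odd real and even imaginary part. -/
theorem sym_recip {a c : GaussianInt} (ha : EvenIm a) (hc : EvenIm c) : sym a c = sym c a := by
  obtain ⟨s, hs, h1⟩ := exists_evenIm_primes ha.oddG
  obtain ⟨t, ht, h2⟩ := exists_evenIm_primes hc.oddG
  have key {x : GaussianInt} {s : Multiset GaussianInt} (hx : EvenIm x)
      (hs : ∀ p ∈ s, Prime p ∧ EvenIm p) (h : Associated s.prod x) {p : GaussianInt}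
      (hp : Prime p) : ps x p = (s.map fun l => ps l p).prod := by
    rw [← ps_prod hp]
    rcases evenIm_assoc (evenIm_prod fun p hp => (hs p hp).2) hx h with h' | h' <;> rw [h']
    exact ps_neg hp _
  rw [sym_eq_of_prod (fun p hp => (ht p hp).1) h2, sym_eq_of_prod (fun p hp => (hs p hp).1) h1]
  rw [Multiset.map_congr rfl fun p hp => key ha hs h1 (ht p hp).1,
    Multiset.map_congr rfl fun p hp => key hc ht h2 (hs p hp).1, Multiset.prod_map_prod_map]
  congr 1
  refine Multiset.map_congr rfl fun l hl => ?_
  congr 1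
  exact Multiset.map_congr rfl fun p hp =>
    ps_recip (ht p hp).1 (hs l hl).1 (ht p hp).2 (hs l hl).2

theorem ps_gi {p : GaussianInt} (hp : Prime p) (ho : OddG p) :
    (gnorm p % 8 = 1 ∧ ps gi p = 1) ∨ (gnorm p % 8 = 5 ∧ ps gi p = -1) := by
  have h4 := gnorm_mod_four ho
  have h4' : gi ^ 4 = 1 := by rw [show gi ^ 4 = (gi ^ 2) ^ 2 by ring, gi_sq]; ring
  rcases (by omega : gnorm p % 8 = 1 ∨ gnorm p % 8 = 5) with h | h
  · refine Or.inl ⟨h, ps_unique hp ho (by simp) ?_⟩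
    rw [show (gnorm p - 1) / 2 = 4 * ((gnorm p - 1) / 8) by omega, pow_mul, h4', one_pow]
    simp
  · refine Or.inr ⟨h, ps_unique hp ho (by simp) ?_⟩
    rw [show (gnorm p - 1) / 2 = 4 * ((gnorm p - 1) / 8) + 2 by omega, pow_add, pow_mul, h4',
      one_pow, gi_sq]
    simp

/-- Supplementary law for `i`: the symbol depends on the norm modulo `8`. -/
theorem sym_gi_aux {n : GaussianInt} (ho : OddG n) :
    (gnorm n % 8 = 1 ∧ sym gi n = 1) ∨ (gnorm n % 8 = 5 ∧ sym gi n = -1) := by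
  obtain ⟨s, hs, h⟩ := exists_primes ho.ne_zero
  rw [sym_eq_of_prod hs h, ← gnorm_assoc h]
  have ho' : OddG s.prod := ho.of_dvd h.dvd
  clear h
  induction s using Multiset.induction_on with
  | empty => simp [gnorm_one]
  | cons p s ih =>
    rw [Multiset.prod_cons, oddG_mul] at ho'
    rw [Multiset.prod_cons, Multiset.map_cons, Multiset.prod_cons, gnorm_mul, Nat.mul_mod]
    rcases ih (fun q hq => hs q (Multiset.mem_cons_of_mem hq)) ho'.2 with ⟨h1, h2⟩ | ⟨h1, h2⟩ <;>
    rcases ps_gi (hs p (Multiset.mem_cons_self _ _)) ho'.1 with ⟨h3, h4⟩ | ⟨h3, h4⟩ <;>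
    simp [h1, h2, h3, h4]

theorem ModOne16.parts {c : GaussianInt} (h : ModOne16 c) : c.re % 16 = 1 ∧ c.im % 16 = 0 := by
  obtain ⟨d, hd⟩ := h
  have h1 := congrArg Zsqrtd.re hd
  have h2 := congrArg Zsqrtd.im hd
  have : (16 : GaussianInt) = ((16 : ℤ) : GaussianInt) := by norm_num
  rw [this] at h1 h2
  simp at h1 h2
  omega

theorem ModOne16.evenIm {c : GaussianInt} (h : ModOne16 c) : EvenIm c := by
  have := h.parts
  constructor <;> omega

theorem sym_gi {c : GaussianInt} (h : ModOne16 c) : sym gi c = 1 := by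
  obtain ⟨h1, h2⟩ := h.parts
  rcases sym_gi_aux h.evenIm.oddG with h3 | h3
  · exact h3.2
  · exfalso
    have h4 := gnorm_eq c
    have h5 : (c.re ^ 2 + c.im ^ 2) % 8 = 1 := by
      have h6 : c.re % 8 = 1 := by omega
      have h7 : c.im % 8 = 0 := by omega
      simp [pow_two, Int.add_emod, Int.mul_emod, h6, h7]
    omega

theorem sym_unit_left {c u : GaussianInt} (h : ModOne16 c) (hu : IsUnit u) : sym u c = 1 := by
  have h0 := h.evenIm.oddG.ne_zero
  have hm : sym (-1) c = 1 := by
    rw [← gi_sq, pow_two, sym_mul_left h0, sym_gi h, one_mul]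
  rcases unit_cases hu with rfl | rfl | rfl | rfl
  · exact sym_one_left h0
  · exact hm
  · exact sym_gi h
  · rw [← neg_one_mul, sym_mul_left h0, hm, sym_gi h, one_mul]

/-- For `c ≡ 1 (mod 16)`, the values of `χ_c` at odd elements are symbols to the other modulus. -/
theorem sym_recip16 {a c : GaussianInt} (ha : OddG a) (hc : ModOne16 c) : sym a c = sym c a := by
  obtain ⟨w, hw, hwE⟩ := exists_evenIm ha
  rw [sym_assoc ha.ne_zero hw, ← sym_recip hwE hc.evenIm]
  obtain ⟨u, rfl⟩ := hw
  rw [sym_mul_left hc.evenIm.oddG.ne_zero, sym_unit_left hc u.isUnit, mul_one]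

end

/-! ### Gaussian sums over `ℤ[i]` and Poisson summation -/

/-- The Gaussian weight `exp(-π t N(α))`. -/
def gw (t : ℝ) (α : GaussianInt) : ℝ := Real.exp (-(Real.pi * t * gnorm α))

theorem gw_pos (t : ℝ) (α : GaussianInt) : 0 < gw t α := Real.exp_pos _

theorem gw_zero (t : ℝ) : gw t 0 = 1 := by simp [gw, gnorm_zero]

theorem exp_neg_le {a z : ℝ} (ha : 0 < a) (hz : 0 < z) : Real.exp (-z) ≤ a ^ a * z ^ (-a) := by
  have h1 : z / a ≤ Real.exp (z / a) := by linarith [Real.add_one_le_exp (z / a)]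
  have h2 := Real.rpow_le_rpow (by positivity) h1 ha.le
  rw [← Real.exp_mul, div_mul_cancel₀ _ ha.ne', Real.div_rpow hz.le ha.le] at h2
  rw [Real.exp_neg, Real.rpow_neg hz.le, ← div_eq_mul_inv, inv_le_comm₀ (Real.exp_pos _)
    (by positivity), inv_div]
  exact h2

/-- Decay of the Gaussian weight, with arbitrary power savings. -/
theorem gw_le {a t : ℝ} {α : GaussianInt} (ha : 0 < a) (ht : 0 < t) (hα : α ≠ 0) :
    gw t α ≤ a ^ a * (t * gnorm α) ^ (-a) := by
  have h0 : (0 : ℝ) < gnorm α := by exact_mod_cast gnorm_pos hα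
  refine le_trans ?_ (exp_neg_le ha (by positivity))
  rw [gw, Real.exp_le_exp, neg_le_neg_iff, mul_assoc]
  exact le_mul_of_one_le_left (by positivity) (by linarith [Real.pi_gt_three])

theorem summable_gnorm {σ : ℝ} (hσ : 1 < σ) :
    Summable fun α : GaussianInt => (gnorm α : ℝ) ^ (-σ) := by
  have h1 := EisensteinSeries.summable_one_div_norm_rpow (k := 2 * σ) (by linarith)
  have hinj : Function.Injective (fun α : GaussianInt => (![α.re, α.im] : Fin 2 → ℤ)) := by
    intro a b h
    have h0 := congrFun h 0
    have h1 := congrFun h 1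
    ext
    · exact h0
    · exact h1
  refine Summable.of_nonneg_of_le (fun _ => by positivity) (fun α => ?_) (h1.comp_injective hinj)
  by_cases hα : α = 0
  · subst hα
    rw [gnorm_zero, Nat.cast_zero, Real.zero_rpow (by linarith)]
    exact Real.rpow_nonneg (norm_nonneg _) _
  simp only [Function.comp]
  have h2 : (‖(![α.re, α.im] : Fin 2 → ℤ)‖) ^ 2 ≤ gnorm α := by
    rw [gnormR]
    have : ‖(![α.re, α.im] : Fin 2 → ℤ)‖ ≤ √((α.re : ℝ) ^ 2 + (α.im : ℝ) ^ 2) := by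
      refine (pi_norm_le_iff_of_nonneg (Real.sqrt_nonneg _)).2 fun i => ?_
      apply Real.le_sqrt_of_sq_le
      fin_cases i <;> simp [Int.norm_eq_abs, sq_nonneg]
    exact (Real.le_sqrt (norm_nonneg _) (by positivity)).1 this
  have h3 : (0 : ℝ) < ‖(![α.re, α.im] : Fin 2 → ℤ)‖ := by
    rw [norm_pos_iff]
    intro h
    exact hα (hinj (by change ![α.re, α.im] = _; rw [h]; ext i; fin_cases i <;> rfl))
  rw [show -(2 * σ) = (2 : ℕ) * (-σ) by push_cast; ring, Real.rpow_mul h3.le, Real.rpow_natCast]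
  exact Real.rpow_le_rpow_of_nonpos (by positivity) h2 (by linarith)

theorem summable_gw {t : ℝ} (ht : 0 < t) : Summable (gw t) := by
  refine Summable.of_norm_bounded_eventually
    (g := fun α : GaussianInt => 2 ^ (2 : ℝ) * (t ^ (-2 : ℝ) * (gnorm α : ℝ) ^ (-2 : ℝ)))
    (((summable_gnorm (by norm_num)).mul_left _).mul_left _) ?_
  filter_upwards [(Set.finite_singleton (0 : GaussianInt)).compl_mem_cofinite] with α hα
  rw [Real.norm_of_nonneg (gw_pos _ _).le, ← Real.mul_rpow ht.le (by positivity)]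
  exact gw_le two_pos ht hα

theorem summable_mul_gw {f : GaussianInt → ℝ} {t : ℝ} (ht : 0 < t) (hf : ∀ α, |f α| ≤ 1) :
    Summable fun α => f α * gw t α := by
  refine Summable.of_norm_bounded (summable_gw ht) fun α => ?_
  rw [norm_mul, Real.norm_of_nonneg (gw_pos t α).le, Real.norm_eq_abs]
  exact mul_le_of_le_one_left (gw_pos _ _).le (hf α)

theorem summable_sqrt_mul_gw {t : ℝ} (ht : 0 < t) :
    Summable fun α : GaussianInt => √(gnorm α : ℝ) * gw t α := by
  refine Summable.of_norm_bounded_eventually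
    (g := fun α : GaussianInt => 3 ^ (3 : ℝ) * (t ^ (-3 : ℝ) * (gnorm α : ℝ) ^ (-2 : ℝ)))
    (((summable_gnorm (by norm_num)).mul_left _).mul_left _) ?_
  filter_upwards [(Set.finite_singleton (0 : GaussianInt)).compl_mem_cofinite] with α hα
  have h0 : (1 : ℝ) ≤ gnorm α := by exact_mod_cast gnorm_pos hα
  have h1 := gw_le (a := 3) three_pos ht hα
  rw [Real.mul_rpow ht.le (by positivity)] at h1
  rw [norm_mul, Real.norm_of_nonneg (gw_pos _ _).le, Real.norm_of_nonneg (by positivity)]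
  have h2 : √(gnorm α : ℝ) ≤ (gnorm α : ℝ) ^ (1 : ℝ) := by
    rw [Real.sqrt_eq_rpow]
    exact Real.rpow_le_rpow_of_exponent_le h0 (by norm_num)
  have h3 : (gnorm α : ℝ) ^ (1 : ℝ) * (gnorm α : ℝ) ^ (-3 : ℝ) = (gnorm α : ℝ) ^ (-2 : ℝ) := by
    rw [← Real.rpow_add (by linarith)]; norm_num
  calc _ ≤ (gnorm α : ℝ) ^ (1 : ℝ) * (3 ^ (3 : ℝ) * (t ^ (-3 : ℝ) * (gnorm α : ℝ) ^ (-3 : ℝ))) :=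
        mul_le_mul h2 h1 (gw_pos _ _).le (by positivity)
    _ = _ := by rw [← h3]; ring

theorem gw_intCast (t : ℝ) (n : ℤ) : gw t n = Real.exp (-(Real.pi * t * (n : ℝ) ^ 2)) := by
  rw [gw, gnormR]; simp

theorem gw_mul (t : ℝ) (α β : GaussianInt) : gw t (α * β) = gw (t * gnorm α) β := by
  rw [gw, gw, gnorm_mul]; push_cast; ring_nf

theorem normSq_toComplex (γ : GaussianInt) : Complex.normSq (toComplex γ) = gnorm γ := by
  rw [gnormR, Complex.normSq_apply, toComplex_def]
  simp [pow_two]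

theorem poisson_one {t : ℝ} (ht : 0 < t) (x : ℝ) :
    ∑' n : ℤ, cexp (-(Real.pi * t * ((n : ℂ) + x) ^ 2)) = (1 / t ^ (1 / 2 : ℝ) : ℝ) *
      ∑' n : ℤ, (gw (1 / t) n : ℂ) * cexp (2 * Real.pi * I * (n * x)) := by
  have ht' : (t : ℂ) ≠ 0 := by exact_mod_cast ht.ne'
  have h := Complex.tsum_exp_neg_quadratic (a := t) (by simpa using ht) (-(t * x))
  have e1 (n : ℤ) : cexp (-(Real.pi * t * ((n : ℂ) + x) ^ 2)) = cexp (-(Real.pi * t * x ^ 2)) *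
      cexp (-Real.pi * t * n ^ 2 + 2 * Real.pi * -(t * x) * n) := by
    rw [← Complex.exp_add]; congr 1; ring
  have e2 (n : ℤ) : cexp (-Real.pi / t * (n + I * -(t * x)) ^ 2) =
      cexp (Real.pi * t * x ^ 2) * ((gw (1 / t) n : ℂ) * cexp (2 * Real.pi * I * (n * x))) := by
    rw [gw_intCast, Complex.ofReal_exp, ← Complex.exp_add, ← Complex.exp_add]
    congr 1
    push_cast
    field_simp
    linear_combination (-x ^ 2 * t ^ 2) * I_sq
  simp_rw [e1]
  rw [tsum_mul_left, h]
  simp_rw [e2]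
  rw [tsum_mul_left, Complex.ofReal_div, Complex.ofReal_cpow ht.le, Complex.exp_neg]
  push_cast
  field_simp

theorem summable_poisson_left {t : ℝ} (ht : 0 < t) (x : ℝ) :
    Summable fun n : ℤ => ‖cexp (-(Real.pi * t * ((n : ℂ) + x) ^ 2))‖ := by
  have h := ((summable_gw (half_pos ht)).comp_injective
    (Int.cast_injective (α := GaussianInt))).mul_left (Real.exp (Real.pi * t * x ^ 2))
  refine Summable.of_nonneg_of_le (fun _ => norm_nonneg _) (fun n => ?_) h
  simp only [Function.comp]
  rw [Complex.norm_exp, gw_intCast, ← Real.exp_add, Real.exp_le_exp]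
  have : (-(Real.pi * t * ((n : ℂ) + x) ^ 2)).re = -(Real.pi * t * ((n : ℝ) + x) ^ 2) := by
    norm_cast
  rw [this]
  have hp : 0 < Real.pi * t := by positivity
  nlinarith [mul_nonneg hp.le (sq_nonneg ((n : ℝ) + 2 * x))]

theorem summable_poisson_right {t : ℝ} (ht : 0 < t) (x : ℝ) :
    Summable fun n : ℤ => ‖(gw t n : ℂ) * cexp (2 * Real.pi * I * (n * x))‖ := by
  refine ((summable_gw ht).comp_injective (Int.cast_injective (α := GaussianInt))).congr
    fun n => ?_
  rw [norm_mul, show 2 * Real.pi * I * (n * x) = ((2 * Real.pi * (n * x) : ℝ) : ℂ) * I by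
    push_cast; ring, Complex.norm_exp_ofReal_mul_I, mul_one, Complex.norm_real,
    Real.norm_of_nonneg (gw_pos _ _).le]
  rfl

/-- Coordinates on `ℤ[i]`. -/
def giEquiv : ℤ × ℤ ≃ GaussianInt where
  toFun x := ⟨x.1, x.2⟩
  invFun z := (z.re, z.im)
  left_inv _ := rfl
  right_inv _ := rfl

/-- Poisson summation on `ℤ[i]` for a shifted Gaussian. -/
theorem poisson_two {t : ℝ} (ht : 0 < t) (w : ℂ) :
    ∑' γ : GaussianInt, cexp (-(Real.pi * t * Complex.normSq (toComplex γ + w))) =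
      (1 / t : ℝ) * ∑' k : GaussianInt, (gw (1 / t) k : ℂ) *
        cexp (2 * Real.pi * I * (toComplex k * w).re) := by
  have hl : ∑' γ : GaussianInt, cexp (-(Real.pi * t * Complex.normSq (toComplex γ + w))) =
      (∑' n : ℤ, cexp (-(Real.pi * t * ((n : ℂ) + w.re) ^ 2))) *
      (∑' n : ℤ, cexp (-(Real.pi * t * ((n : ℂ) + w.im) ^ 2))) := by
    rw [tsum_mul_tsum_of_summable_norm (summable_poisson_left ht _) (summable_poisson_left ht _),
      ← giEquiv.tsum_eq]
    refine tsum_congr fun x => ?_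
    rw [← Complex.exp_add]
    congr 1
    simp [giEquiv, Complex.normSq_apply, toComplex_def]
    ring
  have hr : ∑' k : GaussianInt, (gw (1 / t) k : ℂ) *
        cexp (2 * Real.pi * I * (toComplex k * w).re) =
      (∑' n : ℤ, (gw (1 / t) n : ℂ) * cexp (2 * Real.pi * I * (n * w.re))) *
      (∑' n : ℤ, (gw (1 / t) n : ℂ) * cexp (2 * Real.pi * I * (n * w.im))) := by
    rw [tsum_mul_tsum_of_summable_norm (summable_poisson_right (by positivity) _)
      (summable_poisson_right (by positivity) _), ← giEquiv.tsum_eq,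
      ← (Equiv.prodCongr (Equiv.refl ℤ) (Equiv.neg ℤ)).tsum_eq]
    refine tsum_congr fun x => ?_
    rw [gw_intCast, gw_intCast, gw, gnormR, Complex.ofReal_exp, Complex.ofReal_exp,
      Complex.ofReal_exp, mul_mul_mul_comm, ← Complex.exp_add, ← Complex.exp_add,
      ← Complex.exp_add, ← Complex.exp_add]
    congr 1
    simp [giEquiv, toComplex_def]
    ring
  rw [hl, hr, poisson_one ht, poisson_one ht, mul_mul_mul_comm, ← Complex.ofReal_mul,
    div_mul_div_comm, ← Real.rpow_add ht]
  norm_num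

/-- The theta series of `ℤ[i]`. -/
def theta (t : ℝ) : ℝ := ∑' α, gw t α

theorem theta_fe {t : ℝ} (ht : 0 < t) : theta t = 1 / t * theta (1 / t) := by
  have h := poisson_two ht 0
  have e1 (γ : GaussianInt) : cexp (-(Real.pi * t * Complex.normSq (toComplex γ + 0))) =
      (gw t γ : ℂ) := by
    rw [gw, ← normSq_toComplex, Complex.ofReal_exp, add_zero]
    push_cast
    rfl
  simp_rw [e1] at h
  simp only [mul_zero, Complex.zero_re, Complex.ofReal_zero, Complex.exp_zero, mul_one] at h
  rw [← Complex.ofReal_tsum, ← Complex.ofReal_tsum, ← Complex.ofReal_mul] at h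
  exact_mod_cast h

theorem gw_anti {s t : ℝ} (h : s ≤ t) (α : GaussianInt) : gw t α ≤ gw s α := by
  rw [gw, gw, Real.exp_le_exp, neg_le_neg_iff]
  have := Real.pi_pos
  gcongr

theorem theta_anti {s t : ℝ} (hs : 0 < s) (h : s ≤ t) : theta t ≤ theta s :=
  (summable_gw (hs.trans_le h)).tsum_le_tsum (gw_anti h) (summable_gw hs)

theorem theta_pos {t : ℝ} (ht : 0 < t) : 0 < theta t :=
  (summable_gw ht).tsum_pos (fun _ => (gw_pos _ _).le) 0 (gw_pos _ _)

theorem theta_inv_le {y : ℝ} (hy : 1 ≤ y) : theta (1 / y) ≤ y * theta 1 := by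
  rw [theta_fe (by positivity), one_div_one_div]
  exact mul_le_mul_of_nonneg_left (theta_anti one_pos hy) (by linarith)

/-- A bounded twist of the theta series without constant term is `O(1/t)` for all `t > 0`. -/
theorem twist_le {f : GaussianInt → ℝ} {t : ℝ} (ht : 0 < t) (hf : ∀ α, |f α| ≤ 1) (h0 : f 0 = 0) :
    |∑' α, f α * gw t α| ≤ theta 1 / t := by
  have hs : Summable fun α => |f α * gw t α| := (summable_mul_gw ht hf).abs
  have hterm (α) : |f α * gw t α| ≤ gw t α := by
    rw [abs_mul, abs_of_pos (gw_pos t α)]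
    exact mul_le_of_le_one_left (gw_pos _ _).le (hf α)
  have h1 : |∑' α, f α * gw t α| ≤ ∑' α, |f α * gw t α| := by
    have := norm_tsum_le_tsum_norm (f := fun α => f α * gw t α) hs
    simpa [Real.norm_eq_abs] using this
  refine h1.trans ?_
  rcases le_total t 1 with h | h
  · have h2 : ∑' α, |f α * gw t α| ≤ theta t := hs.tsum_le_tsum hterm (summable_gw ht)
    have h3 := theta_inv_le (y := 1 / t) (by rw [le_div_iff₀ ht]; linarith)
    rw [one_div_one_div] at h3
    calc _ ≤ theta t := h2
      _ ≤ 1 / t * theta 1 := h3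
      _ = _ := by ring
  · have hb (α) : |f α * gw t α| ≤ gw 1 α * (1 / t) := by
      by_cases hα : α = 0
      · subst hα; rw [h0]; simp; rw [gw_zero]; positivity
      refine (hterm α).trans ?_
      have hN : (1 : ℝ) ≤ gnorm α := by exact_mod_cast gnorm_pos hα
      have e : gw t α = gw 1 α * Real.exp (-(Real.pi * (t - 1) * gnorm α)) := by
        rw [gw, gw, ← Real.exp_add]; congr 1; ring
      rw [e]
      refine mul_le_mul_of_nonneg_left ?_ (gw_pos _ _).le
      rw [Real.exp_neg, ← one_div]
      refine one_div_le_one_div_of_le (by positivity) ?_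
      have h2 : t - 1 ≤ Real.pi * (t - 1) * gnorm α := by
        have : 1 ≤ Real.pi * gnorm α := by nlinarith [Real.pi_gt_three]
        nlinarith
      linarith [Real.add_one_le_exp (Real.pi * (t - 1) * gnorm α)]
    have h2 := hs.tsum_le_tsum hb ((summable_gw one_pos).mul_right _)
    rw [tsum_mul_right] at h2
    calc _ ≤ _ := h2
      _ = theta 1 / t := by rw [theta]; ring

/-! ### Gauss sums and the functional equation of twisted theta series -/

/-- A system of representatives of `ℤ[i]/(q)`. -/
def rep (q : GaussianInt) (x : GaussianInt ⧸ Ideal.span {q}) : GaussianInt :=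
  Function.surjInv Ideal.Quotient.mk_surjective x

theorem mk_rep {q : GaussianInt} (x : GaussianInt ⧸ Ideal.span {q}) :
    Ideal.Quotient.mk (Ideal.span {q}) (rep q x) = x :=
  Function.surjInv_eq Ideal.Quotient.mk_surjective x

/-- `G` is a function on `ℤ[i]/(q)`. -/
def Per (q : GaussianInt) (G : GaussianInt → ℂ) : Prop := ∀ a b, q ∣ a - b → G a = G b

/-- The sum of a periodic function over residues modulo `q`. -/
def qsum (q : GaussianInt) (G : GaussianInt → ℂ) : ℂ := ∑' x, G (rep q x)

theorem qsum_add {q : GaussianInt} {G : GaussianInt → ℂ} (hG : Per q G) (b : GaussianInt) :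
    qsum q (fun a => G (a + b)) = qsum q G := by
  rw [qsum, qsum, ← (Equiv.addRight (Ideal.Quotient.mk (Ideal.span {q}) b)).tsum_eq
    (fun x => G (rep q x))]
  refine tsum_congr fun x => hG _ _ (quot_eq.1 ?_)
  rw [map_add, mk_rep, mk_rep]
  rfl

theorem qsum_mul {q u : GaussianInt} {G : GaussianInt → ℂ} (hG : Per q G) (hu : IsCoprime u q) :
    qsum q (fun a => G (u * a)) = qsum q G := by
  have hunit : IsUnit (Ideal.Quotient.mk (Ideal.span {q}) u) := by
    obtain ⟨a, b, h⟩ := hu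
    refine IsUnit.of_mul_eq_one (Ideal.Quotient.mk _ a) ?_
    rw [← map_mul, ← map_one (Ideal.Quotient.mk _), quot_eq]
    exact ⟨-b, by linear_combination h⟩
  rw [qsum, qsum, ← hunit.unit.mulLeft.tsum_eq (fun x => G (rep q x))]
  refine tsum_congr fun x => hG _ _ (quot_eq.1 ?_)
  rw [map_mul, mk_rep, mk_rep]
  rfl

/-- The additive character `a ↦ exp(2πi Re(a/q))` modulo `q`. -/
def ech (q a : GaussianInt) : ℂ := cexp (2 * Real.pi * I * (toComplex a / toComplex q).re)

theorem toC_ne {q : GaussianInt} (hq : q ≠ 0) : toComplex q ≠ 0 := by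
  rwa [Ne, toComplex_eq_zero]

theorem ech_add (q a b : GaussianInt) : ech q (a + b) = ech q a * ech q b := by
  rw [ech, ech, ech, ← Complex.exp_add, map_add, add_div, Complex.add_re]
  push_cast
  ring_nf

theorem ech_zero (q : GaussianInt) : ech q 0 = 1 := by simp [ech]

theorem ech_eq_one {q a : GaussianInt} (hq : q ≠ 0) (h : q ∣ a) : ech q a = 1 := by
  obtain ⟨b, rfl⟩ := h
  rw [ech, map_mul, mul_div_cancel_left₀ _ (toC_ne hq), Complex.exp_eq_one_iff]
  exact ⟨b.re, by rw [← GaussianInt.intCast_re]; push_cast; ring⟩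

theorem ech_per {q a b : GaussianInt} (hq : q ≠ 0) (h : q ∣ a - b) : ech q a = ech q b := by
  rw [show a = (a - b) + b by ring, ech_add, ech_eq_one hq h, one_mul]

theorem ech_one_int {q a : GaussianInt} (h : ech q a = 1) :
    ∃ n : ℤ, (toComplex a / toComplex q).re = n := by
  rw [ech, Complex.exp_eq_one_iff] at h
  obtain ⟨n, hn⟩ := h
  refine ⟨n, ?_⟩
  have h2 : (2 * Real.pi * I : ℂ) ≠ 0 := Complex.two_pi_I_ne_zero
  have h3 : (((toComplex a / toComplex q).re : ℝ) : ℂ) = n := by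
    apply mul_left_cancel₀ h2
    rw [hn]; ring
  exact_mod_cast h3

theorem ech_nontrivial {q b : GaussianInt} (hq : q ≠ 0) (h : ¬ q ∣ b) :
    ∃ a, ech q (a * b) ≠ 1 := by
  by_contra! hc
  obtain ⟨n, hn⟩ := ech_one_int (hc 1)
  obtain ⟨m, hm⟩ := ech_one_int (hc gi)
  apply h
  refine ⟨⟨n, -m⟩, ?_⟩
  apply toComplex_injective
  rw [map_mul, mul_comm, ← div_eq_iff (toC_ne hq)]
  rw [one_mul] at hn
  have e : toComplex (gi * b) / toComplex q = I * (toComplex b / toComplex q) := by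
    rw [map_mul, show toComplex gi = I by simp [toComplex_def, gi], mul_div_assoc]
  rw [e] at hm
  apply Complex.ext
  · rw [hn]; simp [toComplex_def]
  · simp at hm
    simp [toComplex_def, ← hm]

open scoped Classical in
theorem qsum_ech {q : GaussianInt} (hq : q ≠ 0) (b : GaussianInt) :
    qsum q (fun a => ech q (a * b)) = if q ∣ b then (gnorm q : ℂ) else 0 := by
  have hf := finite_quot hq
  have := Fintype.ofFinite (GaussianInt ⧸ Ideal.span {q})
  split_ifs with h
  · simp_rw [ech_eq_one hq (dvd_mul_of_dvd_right h _)]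
    rw [qsum, tsum_fintype, Finset.sum_const, Finset.card_univ, Fintype.card_eq_nat_card, card_quot]
    simp
  · obtain ⟨a, ha⟩ := ech_nontrivial hq h
    have hp : Per q (fun a => ech q (a * b)) := fun x y hxy =>
      ech_per hq (by rw [← sub_mul]; exact hxy.mul_right b)
    have h1 := qsum_add hp a
    have h2 : qsum q (fun x => ech q ((x + a) * b)) =
        ech q (a * b) * qsum q (fun a => ech q (a * b)) := by
      rw [qsum, qsum, ← tsum_mul_left]
      exact tsum_congr fun x => by rw [add_mul, ech_add, mul_comm]
    rw [h2] at h1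
    have h3 : (ech q (a * b) - 1) * qsum q (fun a => ech q (a * b)) = 0 := by
      rw [sub_mul, h1, one_mul, sub_self]
    exact (mul_eq_zero.1 h3).resolve_left (sub_ne_zero.2 ha)

/-- The finite Fourier transform of the quadratic character modulo `q`. -/
def gs (q k : GaussianInt) : ℂ := qsum q (fun a => (sym a q : ℂ) * ech q (a * k))

theorem gs_per {q : GaussianInt} (hq : q ≠ 0) (k : GaussianInt) :
    Per q (fun a => (sym a q : ℂ) * ech q (a * k)) := fun x y hxy => by
  change (sym x q : ℂ) * ech q (x * k) = (sym y q : ℂ) * ech q (y * k)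
  rw [sym_congr hq hxy, ech_per hq (show q ∣ x * k - y * k by rw [← sub_mul]; exact hxy.mul_right k)]

theorem sym_sq {k q : GaussianInt} (h : sym k q ≠ 0) : (sym k q : ℂ) * sym k q = 1 := by
  rcases sym_cases k q with h1 | h1 | h1
  · exact absurd h1 h
  · simp [h1]
  · simp [h1]

theorem coprime_of_sym {k q : GaussianInt} (hq : q ≠ 0) (h : sym k q ≠ 0) : IsCoprime k q := by
  refine isCoprime_of_prime_dvd (fun h' => hq h'.2) fun p hp hpk hpq => ?_
  exact h ((sym_eq_zero hq).2 ⟨p, hp, hpq, hpk⟩)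

theorem sq_factor {q p : GaussianInt} (hs : Squarefree q) (hp : Prime p) (h : p ∣ q) :
    ∃ m, q = p * m ∧ IsCoprime p m := by
  obtain ⟨m, rfl⟩ := h
  refine ⟨m, rfl, ?_⟩
  rw [hp.coprime_iff_not_dvd]
  rintro ⟨r, rfl⟩
  exact hp.not_isUnit (hs p ⟨r, by ring⟩)

/-- The quadratic character modulo a square-free odd `q` is primitive: its Fourier transform is
proportional to itself. -/
theorem gs_eq {q : GaussianInt} (hs : Squarefree q) (ho : OddG q) (k : GaussianInt) :
    gs q k = sym k q * gs q 1 := by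
  have hq := ho.ne_zero
  by_cases h0 : sym k q = 0
  · rw [h0, Int.cast_zero, zero_mul]
    obtain ⟨p, hp, hpq, hpk⟩ := (sym_eq_zero hq).1 h0
    obtain ⟨m, rfl, hpm⟩ := sq_factor hs hp hpq
    obtain ⟨hop, hom⟩ := oddG_mul.1 ho
    obtain ⟨v, hv⟩ := exists_ps_neg hp hop
    -- a residue class `u ≡ 1 (mod m)` which is a nonresidue modulo `p`
    obtain ⟨x, y, hxy⟩ := hpm
    set u := v * (y * m) + x * p with hu
    have hum : m ∣ u - 1 := ⟨(v - 1) * y, by rw [hu]; linear_combination hxy⟩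
    have hup : p ∣ u - v := ⟨x * (1 - v), by rw [hu]; linear_combination v * hxy⟩
    have hsu : sym u (p * m) = -1 := by
      rw [sym_mul_right hop.ne_zero hom.ne_zero, sym_prime hp, ps_congr hup, hv,
        sym_congr hom.ne_zero hum, sym_one_left hom.ne_zero]
      rfl
    have h1 := qsum_mul (gs_per hq k) (coprime_of_sym hq (by rw [hsu]; decide) :
      IsCoprime u (p * m))
    have h2 : qsum (p * m) (fun a => (sym (u * a) (p * m) : ℂ) * ech (p * m) (u * a * k)) =
        -1 * gs (p * m) k := by
      rw [gs, qsum, qsum, ← tsum_mul_left]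
      refine tsum_congr fun a => ?_
      rw [sym_mul_left hq, hsu, ech_per hq (b := rep (p * m) a * k)]
      · push_cast; ring
      · obtain ⟨r, hr⟩ := hum
        obtain ⟨s, rfl⟩ := hpk
        exact ⟨r * s * rep (p * m) a, by linear_combination rep (p * m) a * (p * s) * hr⟩
    rw [h2] at h1
    have h3 : (2 : ℂ) * gs (p * m) k = 0 := by
      change -1 * gs (p * m) k = gs (p * m) k at h1
      linear_combination -h1
    simpa using h3
  · have h1 := qsum_mul (gs_per hq 1) (coprime_of_sym hq h0)
    have h2 : qsum q (fun a => (sym (k * a) q : ℂ) * ech q (k * a * 1)) = sym k q * gs q k := by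
      rw [gs, qsum, qsum, ← tsum_mul_left]
      refine tsum_congr fun a => ?_
      rw [sym_mul_left hq, mul_one, mul_comm k]; push_cast; ring
    rw [h2] at h1
    change _ = gs q 1 at h1
    rw [← h1, ← mul_assoc, sym_sq h0, one_mul]

theorem sym_norm_one {k q : GaussianInt} (h : sym k q ≠ 0) : ‖(sym k q : ℂ)‖ = 1 := by
  rcases sym_cases k q with h1 | h1 | h1
  · exact absurd h1 h
  · simp [h1]
  · simp [h1]

theorem sym_neg_one_ne {q : GaussianInt} (hq : q ≠ 0) : sym (-1) q ≠ 0 := by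
  intro h
  have h1 := sym_mul_left hq (-1) (-1)
  rw [h, neg_one_mul, neg_neg, sym_one_left hq] at h1
  simp at h1

/-- The absolute value of the Gauss sum. -/
theorem gs_norm {q : GaussianInt} (hs : Squarefree q) (ho : OddG q) :
    ‖gs q 1‖ ^ 2 = gnorm q := by
  have hq := ho.ne_zero
  have hf := finite_quot hq
  have := Fintype.ofFinite (GaussianInt ⧸ Ideal.span {q})
  -- Fourier inversion at `1`
  have h1 : qsum q (fun k => gs q k * ech q (k * (-1))) = gs q 1 * gs q (-1) := by
    have e (k : GaussianInt) : gs q k * ech q (k * (-1)) =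
        gs q 1 * ((sym k q : ℂ) * ech q (k * (-1))) := by rw [gs_eq hs ho k]; ring
    simp_rw [e]
    rw [qsum, tsum_mul_left]
    rfl
  have h2 : qsum q (fun k => gs q k * ech q (k * (-1))) = gnorm q := by
    have e (x y : GaussianInt ⧸ Ideal.span {q}) :
        (sym (rep q x) q : ℂ) * ech q (rep q x * rep q y) * ech q (rep q y * (-1)) =
        (sym (rep q x) q : ℂ) * ech q (rep q y * (rep q x - 1)) := by
      rw [mul_assoc, ← ech_add]; congr 2; ring
    simp only [gs, qsum, tsum_fintype, Finset.sum_mul, e]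
    rw [Finset.sum_comm]
    classical
    have e2 (x : GaussianInt ⧸ Ideal.span {q}) :
        ∑ y, (sym (rep q x) q : ℂ) * ech q (rep q y * (rep q x - 1)) =
        if x = Ideal.Quotient.mk _ 1 then (gnorm q : ℂ) else 0 := by
      rw [← Finset.mul_sum]
      have h3 := qsum_ech hq (rep q x - 1)
      rw [qsum, tsum_fintype] at h3
      rw [h3]
      have h4 : x = Ideal.Quotient.mk _ 1 ↔ q ∣ rep q x - 1 := by
        rw [← quot_eq, mk_rep]
      simp only [h4]
      split_ifs with h5
      · rw [sym_congr hq h5, sym_one_left hq]; simp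
      · simp
    simp only [e2]
    simp
  rw [h2, gs_eq hs ho (-1)] at h1
  have h3 := congrArg norm h1
  rw [norm_mul, norm_mul, sym_norm_one (sym_neg_one_ne hq)] at h3
  rw [Complex.norm_natCast, one_mul] at h3
  rw [h3]; ring

/-- Decomposition of `ℤ[i]` into residue classes modulo `q`. -/
def resEquiv {q : GaussianInt} (hq : q ≠ 0) :
    (GaussianInt ⧸ Ideal.span {q}) × GaussianInt ≃ GaussianInt :=
  Equiv.ofBijective (fun x => rep q x.1 + q * x.2) (by
    constructor
    · rintro ⟨x, γ⟩ ⟨y, δ⟩ h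
      simp only at h
      have h1 : x = y := by
        rw [← mk_rep x, ← mk_rep y, quot_eq]
        exact ⟨δ - γ, by linear_combination h⟩
      subst h1
      rw [add_right_inj, mul_right_inj' hq] at h
      rw [h]
    · intro a
      have h : q ∣ a - rep q (Ideal.Quotient.mk _ a) := by rw [← quot_eq, mk_rep]
      obtain ⟨γ, hγ⟩ := h
      exact ⟨(Ideal.Quotient.mk _ a, γ), by linear_combination -hγ⟩)

/-- The twisted theta series `∑ (α/q) exp(-π t N(α))`. -/
def thq (q : GaussianInt) (t : ℝ) : ℝ := ∑' α, (sym α q : ℝ) * gw t α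

theorem sym_abs_le (α q : GaussianInt) : |(sym α q : ℝ)| ≤ 1 := by
  rcases sym_cases α q with h | h | h <;> simp [h]

theorem thq_fe {q : GaussianInt} (hs : Squarefree q) (ho : OddG q) {t : ℝ} (ht : 0 < t) :
    (thq q t : ℂ) = gs q 1 / (t * gnorm q : ℝ) * thq q (1 / (t * gnorm q)) := by
  have hq := ho.ne_zero
  have hf := finite_quot hq
  have := Fintype.ofFinite (GaussianInt ⧸ Ideal.span {q})
  have hN : (0 : ℝ) < gnorm q := by exact_mod_cast gnorm_pos hq
  set T := t * gnorm q with hT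
  have hT0 : 0 < T := by positivity
  have hsum := summable_mul_gw ht (fun α => sym_abs_le α q)
  have hsum' := ((resEquiv hq).summable_iff.2 hsum)
  have e1 : thq q t = ∑ x, ∑' γ, (sym (rep q x) q : ℝ) * gw t (rep q x + q * γ) := by
    rw [thq, ← (resEquiv hq).tsum_eq]
    refine hsum'.tsum_prod.trans ?_
    rw [tsum_fintype]
    simp only [Function.comp]
    refine Finset.sum_congr rfl fun x _ => tsum_congr fun γ => ?_
    rw [sym_congr hq (show q ∣ (resEquiv hq (x, γ)) - rep q x from
      ⟨γ, add_sub_cancel_left _ _⟩)]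
    rfl
  have e2 (x : GaussianInt ⧸ Ideal.span {q}) :
      ((∑' γ, (sym (rep q x) q : ℝ) * gw t (rep q x + q * γ) : ℝ) : ℂ) =
      (1 / T : ℝ) * ∑' k, (gw (1 / T) k : ℂ) * ((sym (rep q x) q : ℂ) * ech q (rep q x * k)) := by
    have hp := poisson_two hT0 (toComplex (rep q x) / toComplex q)
    have e3 (γ : GaussianInt) : ((gw t (rep q x + q * γ) : ℝ) : ℂ) =
        cexp (-(Real.pi * T * normSq (toComplex γ + toComplex (rep q x) / toComplex q))) := by
      rw [gw, ← normSq_toComplex, map_add, map_mul,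
        show toComplex (rep q x) + toComplex q * toComplex γ =
          toComplex q * (toComplex γ + toComplex (rep q x) / toComplex q) by
          rw [mul_add, mul_div_cancel₀ _ (toC_ne hq), add_comm], Complex.normSq_mul,
        normSq_toComplex, Complex.ofReal_exp, hT]
      push_cast
      ring_nf
    rw [Complex.ofReal_tsum]
    simp_rw [Complex.ofReal_mul, e3]
    rw [tsum_mul_left, hp, mul_left_comm, ← tsum_mul_left]
    congr 1
    refine tsum_congr fun k => ?_
    rw [ech, map_mul, mul_div_right_comm, mul_comm (toComplex k)]
    push_cast
    ring
  have hsk (x : GaussianInt ⧸ Ideal.span {q}) :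
      Summable fun k => (gw (1 / T) k : ℂ) * ((sym (rep q x) q : ℂ) * ech q (rep q x * k)) := by
    refine Summable.of_norm_bounded (summable_gw (t := 1 / T) (by positivity)) fun k => ?_
    rw [norm_mul, norm_mul, Complex.norm_real, Real.norm_of_nonneg (gw_pos _ _).le]
    refine mul_le_of_le_one_right (gw_pos _ _).le ?_
    have h1 : ‖(sym (rep q x) q : ℂ)‖ ≤ 1 := by
      rcases sym_cases (rep q x) q with h | h | h <;> simp [h]
    have h2 : ‖ech q (rep q x * k)‖ = 1 := by
      rw [ech, show 2 * Real.pi * I * ((toComplex (rep q x * k) / toComplex q).re : ℂ) =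
        ((2 * Real.pi * (toComplex (rep q x * k) / toComplex q).re : ℝ) : ℂ) * I by
        push_cast; ring, Complex.norm_exp_ofReal_mul_I]
    rw [h2, mul_one]; exact h1
  rw [e1, Complex.ofReal_sum, Finset.sum_congr rfl fun x _ => e2 x, ← Finset.mul_sum,
    ← Summable.tsum_finsetSum fun x _ => hsk x, thq, Complex.ofReal_tsum, div_mul_eq_mul_div,
    Complex.ofReal_div, Complex.ofReal_one, one_div_mul_eq_div, ← tsum_mul_left (a := gs q 1)]
  congr 1
  refine tsum_congr fun k => ?_
  rw [← Finset.mul_sum]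
  have : ∑ x, (sym (rep q x) q : ℂ) * ech q (rep q x * k) = gs q k := by
    rw [gs, qsum, tsum_fintype]
  rw [this, gs_eq hs ho]
  push_cast
  ring

theorem gs_norm' {q : GaussianInt} (hs : Squarefree q) (ho : OddG q) :
    ‖gs q 1‖ = √(gnorm q) := by
  rw [← gs_norm hs ho, Real.sqrt_sq (norm_nonneg _)]

theorem sym_zero {q : GaussianInt} (hq : q ≠ 0) (hu : ¬ IsUnit q) : sym 0 q = 0 := by
  obtain ⟨p, hp, h⟩ := WfDvdMonoid.exists_irreducible_factor hu hq
  exact (sym_eq_zero hq).2 ⟨p, hp.prime, h, dvd_zero p⟩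

/-- Uniform bound for the theta series of a primitive quadratic character. -/
theorem thq_le {q : GaussianInt} (hs : Squarefree q) (ho : OddG q) (hu : ¬ IsUnit q) {t : ℝ}
    (ht : 0 < t) : |thq q t| ≤ theta 1 * √(gnorm q) := by
  have hN : (0 : ℝ) < gnorm q := by exact_mod_cast gnorm_pos ho.ne_zero
  have h1 := congrArg norm (thq_fe hs ho ht)
  rw [norm_mul, norm_div, gs_norm' hs ho, Complex.norm_real, Complex.norm_real, Complex.norm_real,
    Real.norm_of_nonneg (show 0 ≤ t * gnorm q by positivity), Real.norm_eq_abs,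
    Real.norm_eq_abs] at h1
  have h2 := twist_le (t := 1 / (t * gnorm q)) (by positivity) (fun α => sym_abs_le α q)
    (by rw [sym_zero ho.ne_zero hu]; simp)
  rw [h1]
  calc _ ≤ √(gnorm q : ℝ) / (t * gnorm q) * (theta 1 / (1 / (t * gnorm q))) :=
        mul_le_mul_of_nonneg_left h2 (by positivity)
    _ = _ := by field_simp

/-! ### Character sums over the modulus -/

open scoped Classical in
/-- Removing the multiples of `p` from a completely multiplicative theta series. -/
theorem sieve {f : GaussianInt → ℝ} {p : GaussianInt} {t : ℝ} (ht : 0 < t) (hp : p ≠ 0)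
    (hf : ∀ α, |f α| ≤ 1) (hm : ∀ α, f (p * α) = f p * f α) :
    ∑' α, (if p ∣ α then 0 else f α) * gw t α =
      ∑' α, f α * gw t α - f p * ∑' α, f α * gw (t * gnorm p) α := by
  have hinj : Function.Injective (fun α => p * α) := mul_right_injective₀ hp
  have h1 : ∑' α, (if p ∣ α then f α else 0) * gw t α =
      f p * ∑' α, f α * gw (t * gnorm p) α := by
    rw [← hinj.tsum_eq, ← tsum_mul_left]
    · refine tsum_congr fun α => ?_
      rw [if_pos (dvd_mul_right _ _), hm, gw_mul, mul_assoc]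
    · intro α hα
      rw [Function.mem_support] at hα
      by_cases h : p ∣ α
      · obtain ⟨b, rfl⟩ := h
        exact ⟨b, rfl⟩
      · rw [if_neg h, zero_mul] at hα
        exact absurd rfl hα
  have hs := summable_mul_gw ht hf
  have hs1 : Summable fun α => (if p ∣ α then f α else 0) * gw t α :=
    summable_mul_gw ht fun α => by split_ifs <;> simp [hf]
  rw [← h1, ← hs.tsum_sub hs1]
  refine tsum_congr fun α => ?_
  split_ifs <;> ring

/-- Elements that are a unit times a square. -/
def SqU (n : GaussianInt) : Prop := ∃ u r : GaussianInt, IsUnit u ∧ n = u * r ^ 2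

/-- The bound of `thq_le` persists for imprimitive characters, as long as they are not principal:
removing a factor `p ^ 2` from the modulus is undone by sieving out the multiples of `p`, which at
most doubles the bound, while `√N(p ^ 2) = N(p) ≥ 2`. -/
theorem thq_le' : ∀ (n : GaussianInt), OddG n → ¬ SqU n → ∀ t : ℝ, 0 < t →
    |thq n t| ≤ theta 1 * √(gnorm n) := by
  intro n
  induction h : gnorm n using Nat.strong_induction_on generalizing n with
  | _ N ih =>
  intro ho hS t ht
  by_cases hs : Squarefree n
  · rw [← h]
    exact thq_le hs ho (fun hu => hS ⟨n, 1, hu, by simp⟩) ht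
  have h0 := ho.ne_zero
  obtain ⟨p, hp, m, rfl⟩ : ∃ p, Prime p ∧ p * p ∣ n := by
    rw [Squarefree] at hs
    push Not at hs
    obtain ⟨x, hx, hxu⟩ := hs
    have hx0 : x ≠ 0 := by rintro rfl; exact h0 (by simpa using hx)
    obtain ⟨p, hp, hpx⟩ := WfDvdMonoid.exists_irreducible_factor hxu hx0
    exact ⟨p, hp.prime, (mul_dvd_mul hpx hpx).trans hx⟩
  have hom := (oddG_mul.1 ho).2
  have hm0 := hom.ne_zero
  have hp2 := gnorm_two_le hp
  have hNm := gnorm_pos hm0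
  have hmS : ¬ SqU m := by
    rintro ⟨u, r, hu, rfl⟩
    exact hS ⟨u, p * r, hu, by ring⟩
  have hlt : gnorm m < N := by
    rw [← h, gnorm_mul, gnorm_mul]
    have : 1 < gnorm p * gnorm p := by nlinarith
    exact lt_mul_of_one_lt_left hNm this
  have ihm := ih _ hlt m rfl hom hmS
  classical
  have e : thq (p * p * m) t = thq m t - sym p m * thq m (t * gnorm p) := by
    rw [thq, thq, thq, ← sieve ht hp.ne_zero (fun α => sym_abs_le α m)
      (fun α => by rw [sym_mul_left hm0]; push_cast; ring)]
    refine tsum_congr fun α => ?_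
    congr 1
    rw [sym_mul_right (mul_ne_zero hp.ne_zero hp.ne_zero) hm0,
      sym_mul_right hp.ne_zero hp.ne_zero, sym_prime hp]
    split_ifs with hd
    · rw [ps_eq_zero.2 hd]; simp
    · rw [← pow_two, ps_sq hd, one_mul]
  have hNp : (0 : ℝ) < gnorm p := by exact_mod_cast (by omega : 0 < gnorm p)
  have hN : √(N : ℝ) = gnorm p * √(gnorm m : ℝ) := by
    rw [← h, gnorm_mul, gnorm_mul]
    push_cast
    rw [Real.sqrt_mul (by positivity), Real.sqrt_mul_self hNp.le]
  rw [e, hN]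
  have h1 := ihm t ht
  have h2 := ihm (t * gnorm p) (by positivity)
  have h3 : |thq m t - sym p m * thq m (t * gnorm p)| ≤ |thq m t| + |thq m (t * gnorm p)| := by
    refine (abs_sub _ _).trans (add_le_add le_rfl ?_)
    rw [abs_mul]
    exact mul_le_of_le_one_left (abs_nonneg _) (sym_abs_le _ _)
  have h4 : (2 : ℝ) ≤ gnorm p := by exact_mod_cast hp2
  have h5 : 0 ≤ theta 1 * √(gnorm m : ℝ) := mul_nonneg (theta_pos one_pos).le (Real.sqrt_nonneg _)
  calc _ ≤ 2 * (theta 1 * √(gnorm m : ℝ)) := by linarith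
    _ ≤ gnorm p * (theta 1 * √(gnorm m : ℝ)) := mul_le_mul_of_nonneg_right h4 h5
    _ = _ := by ring

/-- The trivial bound, used when `(·/n)` is a principal character. -/
theorem thq_trivial (n : GaussianInt) {t : ℝ} (ht : 0 < t) : |thq n t| ≤ theta t := by
  have hs : Summable fun α => |(sym α n : ℝ) * gw t α| :=
    (summable_mul_gw ht fun α => sym_abs_le α n).abs
  have h1 : |thq n t| ≤ ∑' α, |(sym α n : ℝ) * gw t α| := by
    have := norm_tsum_le_tsum_norm (f := fun α => (sym α n : ℝ) * gw t α) hs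
    simpa only [Real.norm_eq_abs, thq] using this
  refine h1.trans (hs.tsum_le_tsum (fun α => ?_) (summable_gw ht))
  rw [abs_mul, abs_of_pos (gw_pos t α)]
  exact mul_le_of_le_one_left (gw_pos _ _).le (sym_abs_le _ _)

/-! ### The mean square of theta series over the modulus -/

theorem isUnit_gi : IsUnit gi := IsUnit.of_mul_eq_one (-gi) (by
  rw [mul_neg, ← pow_two, gi_sq, neg_neg])

/-- Representatives `1` and `i` of the two classes of units modulo squares of units. -/
def uw (w : Bool) : GaussianInt := if w then gi else 1

theorem unit_mod_sq {u : GaussianInt} (hu : IsUnit u) (b : GaussianInt) :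
    ∃ w b', u * b ^ 2 = uw w * b' ^ 2 := by
  rcases unit_cases hu with rfl | rfl | rfl | rfl
  · exact ⟨false, b, by simp [uw]⟩
  · exact ⟨false, gi * b, by rw [mul_pow, gi_sq]; simp [uw]⟩
  · exact ⟨true, b, by simp [uw]⟩
  · exact ⟨true, gi * b, by rw [mul_pow, gi_sq]; simp [uw]⟩

/-- If `αβ` is a unit times a square, then `α` and `β` share their square-free parts up to units. -/
theorem sqU_param {α β : GaussianInt} (h0 : α * β ≠ 0) (h : SqU (α * β)) :
    ∃ x : Bool × GaussianInt × GaussianInt × GaussianInt,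
      α = x.2.1 * x.2.2.1 ^ 2 ∧ β = uw x.1 * x.2.1 * x.2.2.2 ^ 2 := by
  obtain ⟨a', b', c, hab, rfl, rfl⟩ := UniqueFactorizationMonoid.exists_reduced_factors α
    (left_ne_zero_of_mul h0) β
  obtain ⟨u, r, hu, hr⟩ := h
  obtain ⟨v, rfl⟩ := hu
  have hc : c ≠ 0 := by rintro rfl; simp at h0
  have hcr : c ∣ r := by
    rw [← IsIntegrallyClosed.pow_dvd_pow_iff two_ne_zero]
    exact ⟨↑v⁻¹ * (a' * b'), by
      have : (↑v⁻¹ : GaussianInt) * v = 1 := Units.inv_mul v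
      linear_combination (-(r ^ 2)) * this - (↑v⁻¹ : GaussianInt) * hr⟩
  obtain ⟨s, rfl⟩ := hcr
  have h1 : a' * b' = v * s ^ 2 := by
    apply mul_left_cancel₀ (pow_ne_zero 2 hc)
    linear_combination hr
  have h2 : (a' * ↑v⁻¹) * b' = s ^ 2 := by
    have : (↑v⁻¹ : GaussianInt) * v = 1 := Units.inv_mul v
    linear_combination (↑v⁻¹ : GaussianInt) * h1 + s ^ 2 * this
  have hcop : IsCoprime (a' * ↑v⁻¹) b' :=
    (isCoprime_mul_unit_right_left (Units.isUnit _) _ _).2 hab.isCoprime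
  obtain ⟨a, u1, ha⟩ := exists_associated_pow_of_mul_eq_pow' hcop h2
  obtain ⟨b, u2, hb⟩ := exists_associated_pow_of_mul_eq_pow' hcop.symm (by rw [mul_comm]; exact h2)
  have h4 : a' = (v * u1 : GaussianIntˣ) * a ^ 2 := by
    have : (↑v⁻¹ : GaussianInt) * v = 1 := Units.inv_mul v
    push_cast
    linear_combination -(v : GaussianInt) * ha - a' * this
  obtain ⟨w, b'', hw⟩ := unit_mod_sq (Units.isUnit (u2 * (v * u1)⁻¹)) b
  refine ⟨⟨w, c * (v * u1 : GaussianIntˣ), a, b''⟩, ?_, ?_⟩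
  · simp only; rw [h4]; ring
  · simp only
    have h5 : ((u2 * (v * u1)⁻¹ : GaussianIntˣ) : GaussianInt) * (v * u1 : GaussianIntˣ) = u2 := by
      rw [← Units.val_mul, inv_mul_cancel_right]
    rw [← hb]
    linear_combination (c * (v * u1 : GaussianIntˣ)) * hw - c * b ^ 2 * h5

theorem diag_term {σ x : ℝ} (hσ : 0 < σ) (hx : 0 < x) {d a b u : GaussianInt} (hu : gnorm u = 1)
    (h : d * a * b ≠ 0) :
    gw x (d * a ^ 2) * gw x (u * d * b ^ 2) ≤ σ ^ σ * x ^ (-σ) *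
      ((gnorm d : ℝ) ^ (-σ) * ((gnorm a : ℝ) ^ (-σ) * (gnorm b : ℝ) ^ (-σ))) := by
  have h1 : gw x (d * a ^ 2) * gw x (u * d * b ^ 2) ≤ gw x (d * a * b) := by
    rw [gw, gw, gw, ← Real.exp_add, Real.exp_le_exp]
    simp only [pow_two, gnorm_mul, hu, one_mul]
    push_cast
    have hp : 0 ≤ Real.pi * x * gnorm d := by positivity
    have h2 : (gnorm a : ℝ) * gnorm b ≤ gnorm a * gnorm a + gnorm b * gnorm b := by
      nlinarith [sq_nonneg ((gnorm a : ℝ) - gnorm b), sq_nonneg (gnorm a : ℝ),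
        sq_nonneg (gnorm b : ℝ)]
    nlinarith [mul_le_mul_of_nonneg_left h2 hp]
  refine h1.trans ((gw_le hσ hx h).trans (le_of_eq ?_))
  rw [gnorm_mul, gnorm_mul]
  push_cast
  rw [Real.mul_rpow hx.le (by positivity), Real.mul_rpow (by positivity) (by positivity),
    Real.mul_rpow (by positivity) (by positivity)]
  ring

theorem gnorm_uw (w : Bool) : gnorm (uw w) = 1 := by
  rw [gnorm_eq_one]; cases w
  · simp [uw]
  · simpa [uw] using isUnit_gi

theorem summable_pair {x : ℝ} (hx : 0 < x) :
    Summable fun z : GaussianInt × GaussianInt => gw x z.1 * gw x z.2 :=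
  (summable_gw hx).mul_of_nonneg (summable_gw hx) (fun _ => (gw_pos _ _).le)
    (fun _ => (gw_pos _ _).le)

/-- The diagonal contribution. -/
theorem diag_le {σ : ℝ} (hσ : 1 < σ) : ∃ K : ℝ, ∀ x : ℝ, 0 < x →
    ∑' z : {z : GaussianInt × GaussianInt // z.1 * z.2 ≠ 0 ∧ SqU (z.1 * z.2)},
      gw x z.1.1 * gw x z.1.2 ≤ K * x ^ (-σ) := by
  have hN := summable_gnorm hσ
  have hnn : (0 : GaussianInt → ℝ) ≤ fun α => (gnorm α : ℝ) ^ (-σ) := fun α => by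
    simp only [Pi.zero_apply]; positivity
  have h3 := hN.mul_of_nonneg (hN.mul_of_nonneg hN hnn hnn) hnn
    (fun z => mul_nonneg (hnn _) (hnn _))
  have h4 : Summable fun z : Bool × GaussianInt × GaussianInt × GaussianInt =>
      (1 : ℝ) * ((gnorm z.2.1 : ℝ) ^ (-σ) *
        ((gnorm z.2.2.1 : ℝ) ^ (-σ) * (gnorm z.2.2.2 : ℝ) ^ (-σ))) :=
    Summable.mul_of_nonneg (f := fun _ : Bool => (1 : ℝ)) (Summable.of_finite) h3
      (fun _ => zero_le_one) (fun z => mul_nonneg (hnn _) (mul_nonneg (hnn _) (hnn _)))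
  refine ⟨∑' z : Bool × GaussianInt × GaussianInt × GaussianInt, σ ^ σ * (1 *
    ((gnorm z.2.1 : ℝ) ^ (-σ) * ((gnorm z.2.2.1 : ℝ) ^ (-σ) * (gnorm z.2.2.2 : ℝ) ^ (-σ)))),
    fun x hx => ?_⟩
  rw [← tsum_mul_right]
  choose e he1 he2 using fun z : {z : GaussianInt × GaussianInt //
    z.1 * z.2 ≠ 0 ∧ SqU (z.1 * z.2)} => sqU_param z.2.1 z.2.2
  refine Summable.tsum_le_tsum_of_inj e ?_ ?_ ?_ ?_ ((h4.mul_left _).mul_right _)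
  · intro z z' h
    apply Subtype.ext
    apply Prod.ext
    · rw [he1, he1, h]
    · rw [he2, he2, h]
  · intro z _
    have : 0 < σ := by linarith
    positivity
  · intro z
    have hne : (e z).2.1 * (e z).2.2.1 * (e z).2.2.2 ≠ 0 := by
      have h0 := z.2.1
      rw [he1 z, he2 z] at h0
      intro h
      apply h0
      linear_combination ((e z).2.2.1 * uw (e z).1 * (e z).2.1 * (e z).2.2.2) * h
    have := diag_term (by linarith : 0 < σ) hx (gnorm_uw (e z).1) hne
    rw [← he1 z, ← he2 z] at this
    refine this.trans (le_of_eq ?_)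
    ring
  · exact (summable_pair hx).comp_injective Subtype.val_injective

/-- The off-diagonal contribution. -/
theorem offdiag_le {σ : ℝ} (hσ : 1 < σ) : ∃ K : ℝ, 0 ≤ K ∧ ∀ x : ℝ, 0 < x →
    ∑' α : GaussianInt, √(gnorm α : ℝ) * gw x α ≤ K * x ^ (-(σ + 1 / 2)) := by
  have ha : 0 < σ + 1 / 2 := by linarith
  refine ⟨∑' α : GaussianInt, (σ + 1 / 2) ^ (σ + 1 / 2) * (gnorm α : ℝ) ^ (-σ),
    tsum_nonneg fun _ => by positivity, fun x hx => ?_⟩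
  rw [← tsum_mul_right]
  refine (summable_sqrt_mul_gw hx).tsum_le_tsum (fun α => ?_)
    (((summable_gnorm hσ).mul_left _).mul_right _)
  by_cases hα : α = 0
  · subst hα; rw [gnorm_zero]; simp; positivity
  have hN : (0 : ℝ) < gnorm α := by exact_mod_cast gnorm_pos hα
  have h1 := gw_le ha hx hα
  rw [Real.mul_rpow hx.le hN.le] at h1
  have h2 : √(gnorm α : ℝ) * (gnorm α : ℝ) ^ (-(σ + 1 / 2)) = (gnorm α : ℝ) ^ (-σ) := by
    rw [Real.sqrt_eq_rpow, ← Real.rpow_add hN]; congr 1; ring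
  calc _ ≤ √(gnorm α : ℝ) * ((σ + 1 / 2) ^ (σ + 1 / 2) *
        (x ^ (-(σ + 1 / 2)) * (gnorm α : ℝ) ^ (-(σ + 1 / 2)))) := by gcongr
    _ = _ := by rw [← h2]; ring

open scoped Classical in
/-- The theta series over odd elements, with the roles of the entries of the symbol exchanged. -/
def tho (c : GaussianInt) (x : ℝ) : ℝ := ∑' α, (if OddG α then (sym c α : ℝ) else 0) * gw x α

theorem odd_abs_le {f : GaussianInt → ℝ} (hf : ∀ α, |f α| ≤ 1) [DecidablePred OddG]
    (α : GaussianInt) : |if OddG α then f α else 0| ≤ 1 := by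
  split_ifs
  · exact hf α
  · simp

open scoped Classical in
theorem tho_le (c : GaussianInt) {x : ℝ} (hx : 0 < x) : |tho c x| ≤ theta x := by
  have hb := odd_abs_le (fun α => sym_abs_le c α)
  have hs := (summable_mul_gw hx hb).abs
  have h1 : |tho c x| ≤ ∑' α, |(if OddG α then (sym c α : ℝ) else 0) * gw x α| := by
    have := norm_tsum_le_tsum_norm (f := fun α => (if OddG α then (sym c α : ℝ) else 0) * gw x α) hs
    simp only [Real.norm_eq_abs] at this
    exact this
  refine h1.trans (hs.tsum_le_tsum (fun α => ?_) (summable_gw hx))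
  rw [abs_mul, abs_of_pos (gw_pos x α)]
  exact mul_le_of_le_one_left (gw_pos _ _).le (hb _)

theorem summable_tho_sq {x t : ℝ} (hx : 0 < x) (ht : 0 < t) :
    Summable fun c => gw t c * tho c x ^ 2 := by
  refine Summable.of_nonneg_of_le (fun c => by have := (gw_pos t c).le; positivity) (fun c => ?_)
    ((summable_gw ht).mul_right (theta x ^ 2))
  refine mul_le_mul_of_nonneg_left ?_ (gw_pos _ _).le
  exact sq_le_sq.2 ((tho_le c hx).trans (le_abs_self _))

/-- Expanding the square and summing over `c` first. -/
theorem tho_sq_sum {x t : ℝ} (hx : 0 < x) (ht : 0 < t) :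
    ∑' c, gw t c * tho c x ^ 2 = ∑' z : GaussianInt × GaussianInt,
      Set.indicator {z | OddG z.1 ∧ OddG z.2} (fun z => gw x z.1 * gw x z.2 * thq (z.1 * z.2) t) z
      := by
  classical
  set o : GaussianInt → GaussianInt → ℝ := fun c α => if OddG α then (sym c α : ℝ) else 0 with hoo
  have hb (c : GaussianInt) := odd_abs_le (fun α => sym_abs_le c α)
  have e1 (c : GaussianInt) : gw t c * tho c x ^ 2 =
      ∑' z : GaussianInt × GaussianInt, gw t c * (o c z.1 * gw x z.1 * (o c z.2 * gw x z.2)) := by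
    have hs := (summable_mul_gw hx (hb c)).norm
    have h2 : tho c x = ∑' α, o c α * gw x α := by
      rw [tho]
    rw [tsum_mul_left, pow_two, h2, tsum_mul_tsum_of_summable_norm hs hs]
  simp_rw [e1]
  rw [← Summable.tsum_comm]
  · refine tsum_congr fun z => ?_
    by_cases hz : OddG z.1 ∧ OddG z.2
    · rw [Set.indicator_of_mem (show z ∈ {z : GaussianInt × GaussianInt | OddG z.1 ∧ OddG z.2} from hz),
        thq, ← tsum_mul_left]
      refine tsum_congr fun c => ?_
      simp only [hoo]
      rw [if_pos hz.1, if_pos hz.2, sym_mul_right hz.1.ne_zero hz.2.ne_zero]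
      push_cast
      ring
    · rw [Set.indicator_of_notMem (show z ∉ {z : GaussianInt × GaussianInt | OddG z.1 ∧ OddG z.2}
        from hz)]
      have (c : GaussianInt) : gw t c * (o c z.1 * gw x z.1 * (o c z.2 * gw x z.2)) = 0 := by
        simp only [hoo]
        by_cases h : OddG z.1
        · rw [if_neg (fun h2 => hz ⟨h, h2⟩)]; simp
        · rw [if_neg h]; simp
      simp [this]
  · refine Summable.of_norm_bounded
      (g := fun p : GaussianInt × (GaussianInt × GaussianInt) => gw t p.1 * (gw x p.2.1 * gw x p.2.2))
      ((summable_gw ht).mul_of_nonneg (summable_pair hx) (fun _ => (gw_pos _ _).le)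
        (fun _ => mul_nonneg (gw_pos _ _).le (gw_pos _ _).le))
      fun p => ?_
    simp only [Function.uncurry]
    rw [norm_mul, norm_mul, norm_mul, norm_mul, Real.norm_of_nonneg (gw_pos t _).le,
      Real.norm_of_nonneg (gw_pos x _).le, Real.norm_of_nonneg (gw_pos x _).le, Real.norm_eq_abs,
      Real.norm_eq_abs]
    refine mul_le_mul_of_nonneg_left ?_ (gw_pos _ _).le
    exact mul_le_mul (mul_le_of_le_one_left (gw_pos _ _).le (hb _ _))
      (mul_le_of_le_one_left (gw_pos _ _).le (hb _ _))
      (mul_nonneg (abs_nonneg _) (gw_pos _ _).le) (gw_pos _ _).le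

/-- Mean square bound over all moduli `c`, in terms of `x` and the length `y` of the average. -/
theorem mean_square {σ : ℝ} (hσ : 1 < σ) : ∃ K : ℝ, ∀ x : ℝ, 0 < x → ∀ y : ℝ, 1 ≤ y →
    ∑' c, gw (1 / y) c * tho c x ^ 2 ≤ K * (y * x ^ (-σ) + x ^ (-(2 * σ + 1))) := by
  classical
  obtain ⟨K1, h1⟩ := diag_le hσ
  obtain ⟨K2, hK2, h2⟩ := offdiag_le hσ
  have hθ := (theta_pos one_pos).le
  refine ⟨theta 1 * (|K1| + K2 ^ 2), fun x hx y hy => ?_⟩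
  have ht : 0 < 1 / y := by positivity
  rw [tho_sq_sum hx ht]
  set D := {z : GaussianInt × GaussianInt | z.1 * z.2 ≠ 0 ∧ SqU (z.1 * z.2)} with hD
  have sD : Summable (D.indicator fun z => gw x z.1 * gw x z.2) := (summable_pair hx).indicator _
  have sO : Summable fun z : GaussianInt × GaussianInt =>
      (√(gnorm z.1 : ℝ) * gw x z.1) * (√(gnorm z.2 : ℝ) * gw x z.2) :=
    (summable_sqrt_mul_gw hx).mul_of_nonneg (summable_sqrt_mul_gw hx)
      (fun _ => mul_nonneg (Real.sqrt_nonneg _) (gw_pos _ _).le)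
      (fun _ => mul_nonneg (Real.sqrt_nonneg _) (gw_pos _ _).le)
  have hb (z : GaussianInt × GaussianInt) :
      |Set.indicator {z | OddG z.1 ∧ OddG z.2}
        (fun z => gw x z.1 * gw x z.2 * thq (z.1 * z.2) (1 / y)) z| ≤
      theta 1 * (y * D.indicator (fun z => gw x z.1 * gw x z.2) z +
        (√(gnorm z.1 : ℝ) * gw x z.1) * (√(gnorm z.2 : ℝ) * gw x z.2)) := by
    have hg1 := gw_pos x z.1
    have hg2 := gw_pos x z.2
    have hi : 0 ≤ D.indicator (fun z => gw x z.1 * gw x z.2) z :=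
      Set.indicator_nonneg (fun z _ => mul_nonneg (gw_pos _ _).le (gw_pos _ _).le) z
    by_cases hz : OddG z.1 ∧ OddG z.2
    · have ho : OddG (z.1 * z.2) := oddG_mul.2 hz
      rw [Set.indicator_of_mem (show z ∈ {z : GaussianInt × GaussianInt | OddG z.1 ∧ OddG z.2}
        from hz), abs_mul, abs_of_pos (mul_pos hg1 hg2)]
      by_cases hS : SqU (z.1 * z.2)
      · rw [Set.indicator_of_mem (show z ∈ D from ⟨ho.ne_zero, hS⟩)]
        have h3 := (thq_trivial (z.1 * z.2) ht).trans (theta_inv_le hy)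
        have h4 := mul_le_mul_of_nonneg_left h3 (mul_pos hg1 hg2).le
        have h5 : 0 ≤ theta 1 * ((√(gnorm z.1 : ℝ) * gw x z.1) * (√(gnorm z.2 : ℝ) * gw x z.2)) := by
          positivity
        linarith
      · have h3 := thq_le' _ ho hS _ ht
        rw [gnorm_mul, Nat.cast_mul, Real.sqrt_mul (by positivity)] at h3
        have h4 := mul_le_mul_of_nonneg_left h3 (mul_pos hg1 hg2).le
        have h5 : 0 ≤ theta 1 * (y * D.indicator (fun z => gw x z.1 * gw x z.2) z) := by positivity
        linarith
    · rw [Set.indicator_of_notMem (show z ∉ {z : GaussianInt × GaussianInt | OddG z.1 ∧ OddG z.2}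
        from hz), abs_zero]
      positivity
  have sB := ((sD.mul_left y).add sO).mul_left (theta 1)
  have h3 := (Summable.of_norm_bounded sB hb).tsum_le_tsum (fun z => (le_abs_self _).trans (hb z)) sB
  refine h3.trans ?_
  rw [tsum_mul_left, (sD.mul_left y).tsum_add sO, tsum_mul_left, ← tsum_subtype,
    ← tsum_mul_tsum_of_summable_norm (summable_sqrt_mul_gw hx).norm (summable_sqrt_mul_gw hx).norm,
    mul_assoc]
  refine mul_le_mul_of_nonneg_left ?_ hθ
  have h4 : ∑' z : D, gw x z.1.1 * gw x z.1.2 ≤ |K1| * x ^ (-σ) :=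
    (h1 x hx).trans (mul_le_mul_of_nonneg_right (le_abs_self _) (by positivity))
  have h5 := h2 x hx
  have h6 : 0 ≤ ∑' α : GaussianInt, √(gnorm α : ℝ) * gw x α :=
    tsum_nonneg fun α => mul_nonneg (Real.sqrt_nonneg _) (gw_pos _ _).le
  have h7 : x ^ (-(σ + 1 / 2)) * x ^ (-(σ + 1 / 2)) = x ^ (-(2 * σ + 1)) := by
    rw [← Real.rpow_add hx]; congr 1; ring
  have h8 := mul_le_mul h5 h5 h6 (h6.trans h5)
  have h9 : (K2 * x ^ (-(σ + 1 / 2))) * (K2 * x ^ (-(σ + 1 / 2))) = K2 ^ 2 * x ^ (-(2 * σ + 1)) := by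
    rw [← h7]; ring
  rw [h9] at h8
  have h10 := mul_le_mul_of_nonneg_left h4 (by linarith : 0 ≤ y)
  have h11 : 0 ≤ |K1| * x ^ (-(2 * σ + 1)) := by positivity
  have h12 : 0 ≤ K2 ^ 2 * (y * x ^ (-σ)) := by positivity
  linarith

/-! ### The central value as an integral of a theta series -/

/-- A bounded twist of the theta series without constant term decays faster than any power of `t`,
uniformly in the coefficients. -/
theorem twist_decay {a : ℝ} (ha : 1 < a) : ∃ K : ℝ, ∀ f : GaussianInt → ℝ, (∀ α, |f α| ≤ 1) →
    f 0 = 0 → ∀ t : ℝ, 0 < t → |∑' α, f α * gw t α| ≤ K * t ^ (-a) := by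
  refine ⟨∑' α : GaussianInt, a ^ a * (gnorm α : ℝ) ^ (-a), fun f hf h0 t ht => ?_⟩
  have ha0 : 0 < a := by linarith
  have hs := (summable_mul_gw ht hf).abs
  have h1 : |∑' α, f α * gw t α| ≤ ∑' α, |f α * gw t α| := by
    have := norm_tsum_le_tsum_norm (f := fun α => f α * gw t α) hs
    simpa only [Real.norm_eq_abs] using this
  rw [← tsum_mul_right]
  refine h1.trans (hs.tsum_le_tsum (fun α => ?_) (((summable_gnorm ha).mul_left _).mul_right _))
  by_cases hα : α = 0
  · subst hα
    rw [h0, zero_mul, abs_zero]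
    positivity
  rw [abs_mul, abs_of_pos (gw_pos t α)]
  refine (mul_le_of_le_one_left (gw_pos _ _).le (hf α)).trans ((gw_le ha0 ht hα).trans ?_)
  rw [Real.mul_rpow ht.le (by positivity)]
  exact le_of_eq (by ring)

theorem twist_cont {f : GaussianInt → ℝ} (hf : ∀ α, |f α| ≤ 1) :
    ContinuousOn (fun t => ∑' α, f α * gw t α) (Set.Ioi 0) := by
  intro t ht
  have ht' : (0 : ℝ) < t / 2 := half_pos ht
  have h1 : ContinuousOn (fun t => ∑' α, f α * gw t α) (Set.Ioi (t / 2)) := by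
    refine continuousOn_tsum (fun α => ?_) (summable_gw ht') (fun α x hx => ?_)
    · apply Continuous.continuousOn
      unfold gw
      fun_prop
    · rw [norm_mul, Real.norm_eq_abs, Real.norm_of_nonneg (gw_pos _ _).le]
      exact (mul_le_of_le_one_left (gw_pos _ _).le (hf α)).trans (gw_anti (le_of_lt hx) α)
  exact (h1.continuousAt (Ioi_mem_nhds (half_lt_self ht))).continuousWithinAt

theorem thq_zero_term {c : GaussianInt} (h0 : c ≠ 0) (hc : ¬IsUnit c) : ((sym 0 c : ℤ) : ℝ) = 0 := by
  rw [sym_zero h0 hc, Int.cast_zero]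

theorem thq_decay {a : ℝ} (ha : 1 < a) : ∃ K : ℝ, ∀ c : GaussianInt, c ≠ 0 → ¬IsUnit c →
    ∀ t : ℝ, 0 < t → |thq c t| ≤ K * t ^ (-a) := by
  obtain ⟨K, h⟩ := twist_decay ha
  exact ⟨K, fun c h0 hc t ht => h _ (fun α => sym_abs_le α c) (thq_zero_term h0 hc) t ht⟩

/-- The functional equation for absolute values. -/
theorem thq_abs_fe {c : GaussianInt} (hs : Squarefree c) (ho : OddG c) {t : ℝ} (ht : 0 < t) :
    |thq c t| = (1 / √(gnorm c : ℝ)) / t * |thq c (1 / (t * gnorm c))| := by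
  have hN : (0 : ℝ) < gnorm c := by exact_mod_cast gnorm_pos ho.ne_zero
  have h := congrArg norm (thq_fe hs ho ht)
  rw [norm_mul, norm_div, gs_norm' hs ho, Complex.norm_real, Complex.norm_real, Complex.norm_real,
    Real.norm_eq_abs, Real.norm_eq_abs, Real.norm_eq_abs, abs_of_pos (mul_pos ht hN)] at h
  rw [h]
  congr 1
  have h2 := Real.mul_self_sqrt hN.le
  have h3 := Real.sqrt_pos.2 hN
  field_simp
  nlinarith

theorem thq_bigO_top {c : GaussianInt} (h0 : c ≠ 0) (hc : ¬IsUnit c) {a : ℝ} (ha : 1 < a) :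
    (fun t => (thq c t : ℂ)) =O[atTop] fun t : ℝ => t ^ (-a) := by
  obtain ⟨K, hK⟩ := thq_decay ha
  refine IsBigO.of_bound K ?_
  filter_upwards [eventually_gt_atTop 0] with t ht
  rw [Complex.norm_real, Real.norm_eq_abs, Real.norm_of_nonneg (by positivity)]
  exact hK c h0 hc t ht

theorem thq_bigO_zero {c : GaussianInt} (hs : Squarefree c) (ho : OddG c) (hc : ¬IsUnit c) {b : ℝ}
    (hb : 0 < b) : (fun t => (thq c t : ℂ)) =O[nhdsWithin 0 (Set.Ioi 0)] fun t : ℝ => t ^ b := by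
  have hN : (0 : ℝ) < gnorm c := by exact_mod_cast gnorm_pos ho.ne_zero
  obtain ⟨K, hK⟩ := thq_decay (by linarith : 1 < b + 1)
  refine IsBigO.of_bound ((1 / √(gnorm c : ℝ)) * K * (gnorm c : ℝ) ^ (b + 1)) ?_
  filter_upwards [self_mem_nhdsWithin] with t ht
  have ht : 0 < t := ht
  rw [Complex.norm_real, Real.norm_eq_abs, Real.norm_of_nonneg (by positivity), thq_abs_fe hs ho ht]
  have h1 := hK c ho.ne_zero hc (1 / (t * gnorm c)) (by positivity)
  have h2 : (1 / (t * gnorm c)) ^ (-(b + 1)) = t * t ^ b * (gnorm c : ℝ) ^ (b + 1) := by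
    rw [one_div, Real.inv_rpow (by positivity), Real.rpow_neg (by positivity), inv_inv,
      Real.mul_rpow ht.le hN.le, Real.rpow_add ht, Real.rpow_one]
    ring
  rw [h2] at h1
  calc _ ≤ (1 / √(gnorm c : ℝ)) / t * (K * (t * t ^ b * (gnorm c : ℝ) ^ (b + 1))) := by gcongr
    _ = _ := by field_simp

theorem thq_locInt (c : GaussianInt) :
    LocallyIntegrableOn (fun t => (thq c t : ℂ)) (Set.Ioi 0) := by
  refine ContinuousOn.locallyIntegrableOn ?_ measurableSet_Ioi
  exact Complex.continuous_ofReal.comp_continuousOn (twist_cont fun α => sym_abs_le α c)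

/-- The Mellin transform of `thq c` is entire: the series decays at infinity because it has no
constant term, and at zero by the functional equation. -/
theorem mellin_thq_diff {c : GaussianInt} (hs : Squarefree c) (ho : OddG c) (hc : ¬IsUnit c) :
    Differentiable ℂ (mellin fun t => (thq c t : ℂ)) := fun s => by
  refine mellin_differentiableAt_of_isBigO_rpow (a := |s.re| + 2) (b := -(|s.re| + 1))
    (thq_locInt c) (thq_bigO_top ho.ne_zero hc (by linarith [abs_nonneg s.re]))
    (by linarith [le_abs_self s.re]) ?_ (by linarith [neg_abs_le s.re])
  simpa only [neg_neg] using thq_bigO_zero hs ho hc (by positivity : 0 < |s.re| + 1)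

theorem finite_units : Finite GaussianIntˣ := by
  have : Set.Finite (Set.range fun u : GaussianIntˣ => (u : GaussianInt)) := by
    refine Set.Finite.subset (s := {1, -1, gi, -gi}) (by simp) ?_
    rintro _ ⟨u, rfl⟩
    rcases unit_cases u.isUnit with h | h | h | h <;> simp [h]
  rw [← Set.image_univ] at this
  exact Set.finite_univ_iff.1 (this.of_finite_image Units.val_injective.injOn)

/-- The product of the chosen generator of an ideal and a unit. As the pair varies, each nonzero
Gaussian integer occurs exactly once. -/
def idealUnit (p : {A : Ideal GaussianInt // A ≠ ⊥} × GaussianIntˣ) : GaussianInt :=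
  idealGen p.1.1 * p.2

theorem span_idealGen (A : Ideal GaussianInt) : Ideal.span {idealGen A} = A :=
  Submodule.IsPrincipal.span_singleton_generator A

theorem idealGen_ne_zero (A : {A : Ideal GaussianInt // A ≠ ⊥}) : idealGen A.1 ≠ 0 := fun h => by
  apply A.2
  rw [← span_idealGen A.1, h]
  simp

theorem idealUnit_injective : Function.Injective idealUnit := by
  rintro ⟨A, u⟩ ⟨B, v⟩ h
  simp only [idealUnit] at h
  have h1 : A = B := by
    apply Subtype.ext
    rw [← span_idealGen A.1, ← span_idealGen B.1, Ideal.span_singleton_eq_span_singleton]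
    refine ⟨u * v⁻¹, ?_⟩
    rw [Units.val_mul, ← mul_assoc, h, mul_assoc, Units.mul_inv, mul_one]
  subst h1
  have := mul_left_cancel₀ (idealGen_ne_zero A) h
  rw [Units.ext this]

theorem idealUnit_range {α : GaussianInt} (h : α ≠ 0) : α ∈ Set.range idealUnit := by
  have h1 : Ideal.span {α} ≠ ⊥ := by simpa using h
  have h2 : Associated (idealGen (Ideal.span {α})) α := by
    rw [← Ideal.span_singleton_eq_span_singleton, span_idealGen]
  obtain ⟨u, hu⟩ := h2
  exact ⟨(⟨_, h1⟩, u), hu⟩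

/-- For `Re s > 1` the Mellin transform of the theta series is the completed `L`-function, up to
the number of units. -/
theorem mellin_thq_eq {c : GaussianInt} (hM : ModOne16 c) (hc : ¬IsUnit c) {L : ℂ → ℂ}
    (hL : IsHeckeL c L) {s : ℂ} (hs : 1 < s.re) :
    mellin (fun t => (thq c t : ℂ)) s =
      (Real.pi : ℂ) ^ (-s) * Complex.Gamma s * ((Nat.card GaussianIntˣ : ℂ) * L s) := by
  have ho : OddG c := hM.evenIm.oddG
  have h0 := ho.ne_zero
  have hz := thq_zero_term h0 hc
  have hcnt : Countable GaussianInt := giEquiv.symm.injective.countable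
  have hfin := finite_units
  have := Fintype.ofFinite GaussianIntˣ
  have h1 : HasSum (fun α : GaussianInt => (Real.pi : ℂ) ^ (-s) * Complex.Gamma s * (sym α c : ℂ) /
      (((gnorm α : ℝ) : ℝ) : ℂ) ^ s) (mellin (fun t => (thq c t : ℂ)) s) := by
    refine hasSum_mellin_pi_mul (fun α => ?_) (by linarith) (fun t ht => ?_) ?_
    · by_cases h : α = 0
      · left; subst h; rw [sym_zero h0 hc]; simp
      · right; exact_mod_cast gnorm_pos h
    · have h2 := (summable_mul_gw ht (fun α => sym_abs_le α c)).hasSum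
      have h3 := Complex.hasSum_ofReal.2 h2
      refine (h3.congr_fun ?_)
      intro α
      simp only [gw]
      push_cast
      congr 3
      ring
    · refine Summable.of_nonneg_of_le (fun α => by positivity) (fun α => ?_) (summable_gnorm hs)
      rw [Real.rpow_neg (by positivity), div_eq_mul_inv]
      refine mul_le_of_le_one_left (by positivity) ?_
      have := sym_abs_le α c
      rwa [← Real.norm_eq_abs, ← Complex.norm_real, Complex.ofReal_intCast] at this
  rw [← idealUnit_injective.hasSum_iff] at h1
  · have h2 := h1.prod_fiberwise (g := fun A => (Real.pi : ℂ) ^ (-s) * Complex.Gamma s *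
      ((Nat.card GaussianIntˣ : ℂ) * (heckeChar c A.1 * (idealNorm A.1 : ℂ) ^ (-s)))) (fun A => by
        have h3 : ∀ u : GaussianIntˣ, (Real.pi : ℂ) ^ (-s) * Complex.Gamma s *
            (sym (idealUnit (A, u)) c : ℂ) / (((gnorm (idealUnit (A, u)) : ℝ) : ℝ) : ℂ) ^ s =
            (Real.pi : ℂ) ^ (-s) * Complex.Gamma s *
            (heckeChar c A.1 * (idealNorm A.1 : ℂ) ^ (-s)) := fun u => by
          rw [idealUnit, sym_mul_left h0, sym_unit_left hM u.isUnit, gnorm_mul,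
            gnorm_eq_one.2 u.isUnit, heckeChar, quadSymbol_eq ho, idealNorm]
          simp [Complex.cpow_neg]
          ring
        simp only [Function.comp_apply, h3]
        have h4 := hasSum_fintype fun _ : GaussianIntˣ => (Real.pi : ℂ) ^ (-s) * Complex.Gamma s *
            (heckeChar c A.1 * (idealNorm A.1 : ℂ) ^ (-s))
        convert h4 using 1
        rw [Finset.sum_const, nsmul_eq_mul, Nat.card_eq_fintype_card, Finset.card_univ]
        ring)
    exact h2.unique (((hL.1 s hs).mul_left _).mul_left _)
  · intro α hα
    have : α = 0 := by_contra fun h => hα (idealUnit_range h)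
    subst this
    rw [sym_zero h0 hc]
    simp

/-- The identity of `mellin_thq_eq` at the central point, by analytic continuation. -/
theorem mellin_thq_half {c : GaussianInt} (hS : Squarefree c) (hM : ModOne16 c) (hc : ¬IsUnit c)
    {L : ℂ → ℂ} (hL : IsHeckeL c L) :
    mellin (fun t => (thq c t : ℂ)) (1 / 2) = (Nat.card GaussianIntˣ : ℂ) * L (1 / 2) := by
  have ho : OddG c := hM.evenIm.oddG
  have hpi : (Real.pi : ℂ) ≠ 0 := by exact_mod_cast Real.pi_ne_zero
  set U : Set ℂ := {1}ᶜ with hU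
  have hUo : IsOpen U := isOpen_compl_singleton
  have hA : AnalyticOnNhd ℂ (fun s => (Real.pi : ℂ) ^ s * (Complex.Gamma s)⁻¹ *
      mellin (fun t => (thq c t : ℂ)) s) U := by
    refine DifferentiableOn.analyticOnNhd ?_ hUo
    refine Differentiable.differentiableOn ?_
    refine (Differentiable.mul (fun s => ?_) Complex.differentiable_one_div_Gamma).mul
      (mellin_thq_diff hS ho hc)
    exact (differentiableAt_id).const_cpow (Or.inl hpi)
  have hB : AnalyticOnNhd ℂ (fun s => (Nat.card GaussianIntˣ : ℂ) * L s) U := by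
    refine DifferentiableOn.analyticOnNhd (fun s hs => ?_) hUo
    exact ((hL.2 s hs).const_mul _).differentiableWithinAt
  have hP : IsPreconnected U :=
    (isConnected_compl_singleton_of_one_lt_rank (by simp) _).isPreconnected
  have hE := hA.eqOn_of_preconnected_of_eventuallyEq hB hP (z₀ := 2) (by simp [hU]) (by
    have : {s : ℂ | 1 < s.re} ∈ nhds (2 : ℂ) :=
      (isOpen_lt continuous_const Complex.continuous_re).mem_nhds (by simp)
    filter_upwards [this] with s hs
    have hs : 1 < s.re := hs
    have hG : Complex.Gamma s ≠ 0 := Complex.Gamma_ne_zero_of_re_pos (by linarith)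
    have hp : (Real.pi : ℂ) ^ s ≠ 0 := by simp [Complex.cpow_eq_zero_iff, hpi]
    rw [mellin_thq_eq hM hc hL hs, Complex.cpow_neg]
    field_simp)
  have h := hE (show (1 / 2 : ℂ) ∈ U by
    simp only [hU, Set.mem_compl_iff, Set.mem_singleton_iff]; norm_num)
  simp only [Complex.Gamma_one_half_eq] at h
  rw [← h, mul_inv_cancel₀ (by simp [Complex.cpow_eq_zero_iff, hpi]), one_mul]

theorem thq_int {c : GaussianInt} (hs : Squarefree c) (ho : OddG c) (hc : ¬IsUnit c) :
    IntegrableOn (fun u : ℝ => |thq c u| * u ^ (-(1 / 2) : ℝ)) (Set.Ioi 0) := by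
  have h : MellinConvergent (fun t => (thq c t : ℂ)) (1 / 2) :=
    mellinConvergent_of_isBigO_rpow (a := 2) (b := -1) (thq_locInt c)
      (thq_bigO_top ho.ne_zero hc (by norm_num)) (by norm_num)
      (by simpa only [neg_neg] using thq_bigO_zero hs ho hc one_pos) (by norm_num)
  refine IntegrableOn.congr_fun (s := Set.Ioi 0) (μ := volume) (Integrable.norm h) (fun t ht => ?_) measurableSet_Ioi
  have ht : 0 < t := ht
  rw [norm_smul, Complex.norm_cpow_eq_rpow_re_of_pos ht, Complex.norm_real, Real.norm_eq_abs,
    mul_comm]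
  congr 2
  norm_num

/-- The functional equation reflects the integral about `1 / √N(c)`. -/
theorem thq_reflect {c : GaussianInt} (hs : Squarefree c) (ho : OddG c) :
    ∫ u in Set.Ioc 0 (1 / √(gnorm c : ℝ)), |thq c u| * u ^ (-(1 / 2) : ℝ) ≤
      ∫ u in Set.Ioi (1 / √(gnorm c : ℝ)), |thq c u| * u ^ (-(1 / 2) : ℝ) := by
  have hN : (0 : ℝ) < gnorm c := by exact_mod_cast gnorm_pos ho.ne_zero
  set a := 1 / √(gnorm c : ℝ) with ha
  have ha0 : 0 < a := by positivity
  have haN : a * a = 1 / gnorm c := by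
    rw [ha, div_mul_div_comm, Real.mul_self_sqrt hN.le, one_mul]
  set F : ℝ → ℝ := (Set.Ioc 0 a).indicator fun u => |thq c u| * u ^ (-(1 / 2) : ℝ) with hF
  have h1 : ∫ u in Set.Ioc 0 a, |thq c u| * u ^ (-(1 / 2) : ℝ) = ∫ u in Set.Ioi 0, F u := by
    rw [hF, setIntegral_indicator measurableSet_Ioc]
    congr 2
    ext u; simp
  have h2 : ∫ u in Set.Ioi 0, F u = (a * a) * ∫ u in Set.Ioi 0, F (a * a * u) := by
    rw [integral_comp_mul_left_Ioi F 0 (by positivity : 0 < a * a), mul_zero, smul_eq_mul,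
      mul_inv_cancel_left₀ (by positivity)]
  have h3 := integral_comp_rpow_Ioi (fun u => F (a * a * u)) (p := -1) (by norm_num)
  have h4 : ∫ u in Set.Ioi a, |thq c u| * u ^ (-(1 / 2) : ℝ) =
      ∫ u in Set.Ioi 0, (Set.Ioi a).indicator (fun u => |thq c u| * u ^ (-(1 / 2) : ℝ)) u := by
    rw [setIntegral_indicator measurableSet_Ioi]
    congr 2
    ext u; simp; exact fun h => ha0.trans h
  rw [h1, h2, ← h3, ← integral_const_mul, h4]
  apply le_of_eq
  apply integral_congr_ae
  have hae : ∀ᵐ u ∂(volume.restrict (Set.Ioi (0 : ℝ))), u ≠ a :=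
    ae_restrict_of_ae (by simp [ae_iff])
  filter_upwards [ae_restrict_mem measurableSet_Ioi, hae] with u hu hne
  have hu : 0 < u := hu
  rw [smul_eq_mul, Real.rpow_neg_one]
  by_cases h : a < u
  · rw [Set.indicator_of_mem (show u ∈ Set.Ioi a from h), hF, Set.indicator_of_mem]
    · rw [thq_abs_fe hs ho hu, ← ha]
      have e1 : a * a * u⁻¹ = 1 / (u * gnorm c) := by rw [haN]; field_simp
      rw [← e1]
      have e2 : (a * a * u⁻¹) ^ (-(1 / 2) : ℝ) = a⁻¹ * (u * u ^ (-(1 / 2) : ℝ)) := by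
        rw [Real.mul_rpow (by positivity) (by positivity), Real.mul_rpow ha0.le ha0.le,
          ← Real.rpow_add ha0, Real.inv_rpow hu.le, Real.rpow_neg hu.le, inv_inv]
        have e3 : u * (u ^ (1 / 2 : ℝ))⁻¹ = u ^ (1 / 2 : ℝ) := by
          rw [← Real.rpow_neg hu.le, ← Real.rpow_one_add' hu.le (by norm_num)]; norm_num
        rw [e3]
        norm_num
        exact Or.inl (Real.rpow_neg_one a)
      have e4 : u ^ (-1 - 1 : ℝ) = u⁻¹ * u⁻¹ := by
        rw [Real.rpow_sub hu, Real.rpow_neg_one, Real.rpow_one, div_eq_mul_inv]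
      rw [e2, e4]
      norm_num
      field_simp
    · refine ⟨by positivity, ?_⟩
      rw [mul_assoc]
      refine mul_le_of_le_one_right ha0.le ?_
      rw [← div_eq_mul_inv, div_le_one hu]
      exact h.le
  · rw [Set.indicator_of_notMem (show u ∉ Set.Ioi a from h), hF, Set.indicator_of_notMem]
    · simp
    · rintro ⟨_, h5⟩
      have h6 : a < u⁻¹ * a * a := by
        have : 1 < a / u := by
          rw [lt_div_iff₀ hu, one_mul]
          exact lt_of_le_of_ne (not_lt.1 h) hne
        calc a = 1 * a := (one_mul a).symm
          _ < a / u * a := by gcongr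
          _ = _ := by ring
      linarith

/-- The central value is bounded by the tail of the theta integral. -/
theorem central_le {c : GaussianInt} (hS : Squarefree c) (hM : ModOne16 c) (hc : ¬IsUnit c)
    {L : ℂ → ℂ} (hL : IsHeckeL c L) {X : ℝ} (hX : 0 < X) (hX' : X ≤ 1 / √(gnorm c : ℝ)) :
    ‖L (1 / 2)‖ ≤ 2 * ∫ u in Set.Ioi X, |thq c u| * u ^ (-(1 / 2) : ℝ) := by
  have ho : OddG c := hM.evenIm.oddG
  have hfin := finite_units
  have h_int := thq_int hS ho hc
  have hnn : ∀ u ∈ Set.Ioi (0 : ℝ), 0 ≤ |thq c u| * u ^ (-(1 / 2) : ℝ) := fun u hu => by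
    have : (0 : ℝ) < u := hu
    positivity
  set a := 1 / √(gnorm c : ℝ) with ha
  have ha0 : 0 < a := hX.trans_le hX'
  have h1 : ‖L (1 / 2)‖ ≤ ‖mellin (fun t => (thq c t : ℂ)) (1 / 2)‖ := by
    rw [mellin_thq_half hS hM hc hL, norm_mul, Complex.norm_natCast]
    refine le_mul_of_one_le_left (norm_nonneg _) ?_
    exact_mod_cast Nat.card_pos
  have h2 : ‖mellin (fun t => (thq c t : ℂ)) (1 / 2)‖ ≤
      ∫ u in Set.Ioi 0, |thq c u| * u ^ (-(1 / 2) : ℝ) := by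
    rw [mellin]
    refine (norm_integral_le_integral_norm _).trans (le_of_eq ?_)
    refine setIntegral_congr_fun measurableSet_Ioi (fun t ht => ?_)
    have ht : 0 < t := ht
    rw [norm_smul, Complex.norm_cpow_eq_rpow_re_of_pos ht, Complex.norm_real, Real.norm_eq_abs,
      mul_comm]
    congr 2
    norm_num
  have h3 : ∫ u in Set.Ioi 0, |thq c u| * u ^ (-(1 / 2) : ℝ) =
      (∫ u in Set.Ioc 0 a, |thq c u| * u ^ (-(1 / 2) : ℝ)) +
        ∫ u in Set.Ioi a, |thq c u| * u ^ (-(1 / 2) : ℝ) := by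
    rw [← Set.Ioc_union_Ioi_eq_Ioi ha0.le]
    refine setIntegral_union (Set.Ioc_disjoint_Ioi le_rfl) measurableSet_Ioi
      (h_int.mono_set Set.Ioc_subset_Ioi_self) (h_int.mono_set (Set.Ioi_subset_Ioi ha0.le))
  have h4 := thq_reflect hS ho
  have h5 : ∫ u in Set.Ioi a, |thq c u| * u ^ (-(1 / 2) : ℝ) ≤
      ∫ u in Set.Ioi X, |thq c u| * u ^ (-(1 / 2) : ℝ) := by
    refine setIntegral_mono_set (h_int.mono_set (Set.Ioi_subset_Ioi hX.le)) ?_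
      (Set.Ioi_subset_Ioi hX').eventuallyLE
    filter_upwards [ae_restrict_mem measurableSet_Ioi] with u hu
    exact hnn u (hX.trans hu)
  rw [← ha] at h4
  linarith

/-! ### From the central value to the mean square -/

/-- Removing the even elements from the theta series, together with quadratic reciprocity. -/
theorem tho_eq {c : GaussianInt} (hM : ModOne16 c) {t : ℝ} (ht : 0 < t) :
    tho c t = thq c t - (sym (1 + gi) c : ℝ) * thq c (2 * t) := by
  classical
  have h0 := hM.evenIm.oddG.ne_zero
  have h := sieve ht prime_one_add_gi.ne_zero (fun α => sym_abs_le α c)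
    (fun α => by rw [sym_mul_left h0, Int.cast_mul])
  have h2 : gnorm (1 + gi) = 2 := by simp [gnorm, gi, Zsqrtd.norm_def]
  rw [h2] at h
  rw [thq, thq, mul_comm 2 t]
  push_cast at h
  rw [← h, tho]
  refine tsum_congr fun α => ?_
  by_cases ho : OddG α
  · rw [if_pos ho, if_neg ho, sym_recip16 ho hM]
  · rw [if_neg ho, if_pos (not_not.1 ho)]

/-- Dilation by `2` contracts the tail integral against `u ^ (-1/2)` by the factor
`2 ^ (-1/2) ≤ 3/4`. -/
theorem rpow_half_int {f : ℝ → ℝ} {X : ℝ} (hX : 0 < X)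
    (h : IntegrableOn (fun u : ℝ => |f u| * u ^ (-(1 / 2) : ℝ)) (Set.Ioi 0)) :
    IntegrableOn (fun u : ℝ => |f (2 * u)| * u ^ (-(1 / 2) : ℝ)) (Set.Ioi X) ∧
    ∫ u in Set.Ioi X, |f (2 * u)| * u ^ (-(1 / 2) : ℝ) ≤
      3 / 4 * ∫ u in Set.Ioi X, |f u| * u ^ (-(1 / 2) : ℝ) := by
  have h2 : (0 : ℝ) < 2 := two_pos
  have e (u : ℝ) (hu : u ∈ Set.Ioi X) : |f (2 * u)| * u ^ (-(1 / 2) : ℝ) =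
      2 ^ (1 / 2 : ℝ) * (|f (2 * u)| * (2 * u) ^ (-(1 / 2) : ℝ)) := by
    have hu' : 0 < u := hX.trans hu
    have : (2 : ℝ) ^ (1 / 2 : ℝ) * 2 ^ (-(1 / 2) : ℝ) = 1 := by
      rw [← Real.rpow_add h2]; norm_num
    rw [Real.mul_rpow h2.le hu'.le]
    linear_combination (-(|f (2 * u)| * u ^ (-(1 / 2) : ℝ))) * this
  have hi : IntegrableOn (fun u : ℝ => |f (2 * u)| * (2 * u) ^ (-(1 / 2) : ℝ)) (Set.Ioi X) :=
    (integrableOn_Ioi_comp_mul_left_iff (fun u : ℝ => |f u| * u ^ (-(1 / 2) : ℝ)) X h2).2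
      (h.mono_set (Set.Ioi_subset_Ioi (by positivity)))
  refine ⟨IntegrableOn.congr_fun (hi.const_mul (2 ^ (1 / 2 : ℝ))) (fun u hu => (e u hu).symm)
    measurableSet_Ioi, ?_⟩
  rw [setIntegral_congr_fun measurableSet_Ioi e, integral_const_mul,
    integral_comp_mul_left_Ioi (fun u : ℝ => |f u| * u ^ (-(1 / 2) : ℝ)) X h2, smul_eq_mul,
    ← mul_assoc]
  have h3 : (2 : ℝ) ^ (1 / 2 : ℝ) * 2⁻¹ ≤ 3 / 4 := by
    rw [← Real.sqrt_eq_rpow]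
    have : √(2 : ℝ) ≤ 3 / 2 := Real.sqrt_le_iff.2 (by norm_num)
    linarith
  have hnn (Y : ℝ) (hY : 0 < Y) : 0 ≤ᵐ[volume.restrict (Set.Ioi Y)]
      fun u : ℝ => |f u| * u ^ (-(1 / 2) : ℝ) := by
    filter_upwards [ae_restrict_mem measurableSet_Ioi] with u hu
    have : (0 : ℝ) < u := hY.trans hu
    simp only [Pi.zero_apply]
    positivity
  refine mul_le_mul h3 ?_ (integral_nonneg_of_ae (hnn _ (by positivity))) (by norm_num)
  exact setIntegral_mono_set (h.mono_set (Set.Ioi_subset_Ioi hX.le)) (hnn X hX)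
    (Set.Ioi_subset_Ioi (by linarith)).eventuallyLE

/-- Even elements cost only a constant: by `tho_eq` the integrals `A` of `|thq c|` and `B` of
`|tho c|` satisfy `A ≤ B + 3/4 * A`. -/
theorem tho_int_le {c : GaussianInt} (hs : Squarefree c) (hM : ModOne16 c) (hc : ¬IsUnit c) {X : ℝ}
    (hX : 0 < X) :
    IntegrableOn (fun u : ℝ => |tho c u| * u ^ (-(1 / 2) : ℝ)) (Set.Ioi X) ∧
    ∫ u in Set.Ioi X, |thq c u| * u ^ (-(1 / 2) : ℝ) ≤
      4 * ∫ u in Set.Ioi X, |tho c u| * u ^ (-(1 / 2) : ℝ) := by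
  classical
  have ho := hM.evenIm.oddG
  have h := thq_int hs ho hc
  have hX' := h.mono_set (Set.Ioi_subset_Ioi hX.le)
  obtain ⟨h1, h2⟩ := rpow_half_int hX h
  have hsy := sym_abs_le (1 + gi) c
  have hu (u : ℝ) (hu : u ∈ Set.Ioi X) : 0 < u := hX.trans hu
  have hm : |(sym (1 + gi) c : ℝ)| * 1 ≤ 1 := by simpa using hsy
  have bd (u : ℝ) : |(sym (1 + gi) c : ℝ) * thq c (2 * u)| ≤ |thq c (2 * u)| := by
    rw [abs_mul]; exact mul_le_of_le_one_left (abs_nonneg _) hsy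
  have hI : IntegrableOn (fun u : ℝ => |tho c u| * u ^ (-(1 / 2) : ℝ)) (Set.Ioi X) := by
    have hcont : ContinuousOn (fun u : ℝ => |tho c u| * u ^ (-(1 / 2) : ℝ)) (Set.Ioi X) := by
      refine ContinuousOn.mul ?_ (fun u hx => ?_)
      · refine ContinuousOn.abs ((twist_cont ?_).mono (Set.Ioi_subset_Ioi hX.le))
        exact fun α => odd_abs_le (fun α => sym_abs_le c α) α
      · exact (Real.continuousAt_rpow_const _ _ (Or.inl (hu u hx).ne')).continuousWithinAt
    refine Integrable.mono' (hX'.add h1) (hcont.aestronglyMeasurable measurableSet_Ioi) ?_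
    filter_upwards [ae_restrict_mem measurableSet_Ioi] with u hx
    have hp := hu u hx
    rw [Real.norm_of_nonneg (by positivity), tho_eq hM hp]
    simp only [Pi.add_apply]
    rw [← add_mul]
    refine mul_le_mul_of_nonneg_right ((abs_sub _ _).trans ?_) (by positivity)
    linarith [bd u]
  refine ⟨hI, ?_⟩
  have h3 : ∫ u in Set.Ioi X, |thq c u| * u ^ (-(1 / 2) : ℝ) ≤
      ∫ u in Set.Ioi X, (|tho c u| * u ^ (-(1 / 2) : ℝ) + |thq c (2 * u)| * u ^ (-(1 / 2) : ℝ)) := by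
    refine setIntegral_mono_on hX' (hI.add h1) measurableSet_Ioi (fun u hx => ?_)
    have hp := hu u hx
    rw [← add_mul]
    refine mul_le_mul_of_nonneg_right ?_ (by positivity)
    have e : thq c u = tho c u + (sym (1 + gi) c : ℝ) * thq c (2 * u) := by rw [tho_eq hM hp]; ring
    rw [e]
    refine (abs_add_le _ _).trans ?_
    linarith [bd u]
  rw [integral_add hI h1] at h3
  linarith

theorem cauchy_schwarz {μ : Measure ℝ} {f g : ℝ → ℝ} (hf : Integrable (fun u => f u ^ 2) μ)
    (hg : Integrable (fun u => g u ^ 2) μ) (hfg : Integrable (fun u => f u * g u) μ)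
    (hA : 0 < ∫ u, f u ^ 2 ∂μ) :
    (∫ u, f u * g u ∂μ) ^ 2 ≤ (∫ u, f u ^ 2 ∂μ) * ∫ u, g u ^ 2 ∂μ := by
  set A := ∫ u, f u ^ 2 ∂μ
  set B := ∫ u, g u ^ 2 ∂μ
  set C := ∫ u, f u * g u ∂μ
  have h : 0 ≤ ∫ u, ((C / A) ^ 2 * f u ^ 2 - 2 * (C / A) * (f u * g u) + g u ^ 2) ∂μ :=
    integral_nonneg fun u => by
      have : (C / A) ^ 2 * f u ^ 2 - 2 * (C / A) * (f u * g u) + g u ^ 2 =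
        (C / A * f u - g u) ^ 2 := by ring
      simp only [Pi.zero_apply]
      rw [this]; positivity
  have hd : Integrable (fun u => (C / A) ^ 2 * f u ^ 2 - 2 * (C / A) * (f u * g u)) μ :=
    (hf.const_mul _).sub (hfg.const_mul _)
  rw [integral_add hd hg,
    integral_sub (hf.const_mul _) (hfg.const_mul _), integral_const_mul, integral_const_mul] at h
  have h2 : (C / A) ^ 2 * A - 2 * (C / A) * C + B = B - C ^ 2 / A := by field_simp; ring
  change 0 ≤ (C / A) ^ 2 * A - 2 * (C / A) * C + B at h
  rw [h2, sub_nonneg, div_le_iff₀ hA] at h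
  linarith

theorem tho_sq_int (c : GaussianInt) {δ X : ℝ} (hδ : 0 < δ) (hX : 0 < X) :
    IntegrableOn (fun u : ℝ => tho c u ^ 2 * u ^ δ) (Set.Ioi X) := by
  classical
  have hu (u : ℝ) (hu : u ∈ Set.Ioi X) : 0 < u := hX.trans hu
  have hb := fun α => odd_abs_le (fun α => sym_abs_le c α) α
  obtain ⟨K, hK⟩ := twist_decay (by linarith : 1 < 1 + δ)
  have hcont : ContinuousOn (fun u : ℝ => tho c u ^ 2 * u ^ δ) (Set.Ioi X) := by
    refine ContinuousOn.mul ?_ (fun u hx => ?_)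
    · refine ContinuousOn.pow ((twist_cont ?_).mono (Set.Ioi_subset_Ioi hX.le)) 2
      exact fun α => odd_abs_le (fun α => sym_abs_le c α) α
    · exact (Real.continuousAt_rpow_const _ _ (Or.inl (hu u hx).ne')).continuousWithinAt
  refine Integrable.mono' ((integrableOn_Ioi_rpow_of_lt (by linarith : -(2 + δ) < -1) hX).const_mul
    (K ^ 2)) (hcont.aestronglyMeasurable measurableSet_Ioi) ?_
  filter_upwards [ae_restrict_mem measurableSet_Ioi] with u hx
  have hp := hu u hx
  rw [Real.norm_of_nonneg (by positivity)]
  have h1 : |tho c u| ≤ K * u ^ (-(1 + δ)) := by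
    have h00 : ¬OddG 0 := fun h => h (dvd_zero _)
    have := hK _ (fun α => odd_abs_le (fun α => sym_abs_le c α) α) (if_neg h00) u hp
    rw [tho]
    convert this
  have h2 : tho c u ^ 2 ≤ (K * u ^ (-(1 + δ))) ^ 2 := by
    rw [← sq_abs]
    exact pow_le_pow_left₀ (abs_nonneg _) h1 2
  have h3 : (u ^ (-(1 + δ))) ^ 2 * u ^ δ = u ^ (-(2 + δ)) := by
    rw [pow_two, ← Real.rpow_add hp, ← Real.rpow_add hp]; congr 1; ring
  calc _ ≤ (K * u ^ (-(1 + δ))) ^ 2 * u ^ δ := by gcongr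
    _ = K ^ 2 * ((u ^ (-(1 + δ))) ^ 2 * u ^ δ) := by ring
    _ = _ := by rw [h3]

/-- The central value is controlled by a weighted `L²` integral of the odd theta series. -/
theorem central_sq_le {c : GaussianInt} (hS : Squarefree c) (hM : ModOne16 c) (hc : ¬IsUnit c)
    {L : ℂ → ℂ} (hL : IsHeckeL c L) {X δ : ℝ} (hδ : 0 < δ) (hX : 0 < X)
    (hX' : X ≤ 1 / √(gnorm c : ℝ)) :
    ‖L (1 / 2)‖ ^ 2 ≤ 64 / δ * X ^ (-δ) * ∫ u in Set.Ioi X, tho c u ^ 2 * u ^ δ := by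
  have h1 := central_le hS hM hc hL hX hX'
  obtain ⟨h2, h3⟩ := tho_int_le hS hM hc hX
  have hu (u : ℝ) (hu : u ∈ Set.Ioi X) : 0 < u := hX.trans hu
  have e1 (u : ℝ) (hx : u ∈ Set.Ioi X) : u ^ (-(1 + δ)) = (u ^ (-(1 + δ) / 2)) ^ 2 := by
    rw [pow_two, ← Real.rpow_add (hu u hx)]; congr 1; ring
  have e2 (u : ℝ) (hx : u ∈ Set.Ioi X) : tho c u ^ 2 * u ^ δ = (|tho c u| * u ^ (δ / 2)) ^ 2 := by
    rw [mul_pow, sq_abs, pow_two (u ^ (δ / 2)), ← Real.rpow_add (hu u hx), add_halves]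
  have e3 (u : ℝ) (hx : u ∈ Set.Ioi X) : |tho c u| * u ^ (-(1 / 2) : ℝ) =
      u ^ (-(1 + δ) / 2) * (|tho c u| * u ^ (δ / 2)) := by
    have : u ^ (-(1 + δ) / 2) * u ^ (δ / 2) = u ^ (-(1 / 2) : ℝ) := by
      rw [← Real.rpow_add (hu u hx)]; congr 1; ring
    rw [← this]; ring
  have hlt : -(1 + δ) < -1 := by linarith
  have hA : ∫ u in Set.Ioi X, u ^ (-(1 + δ)) = X ^ (-δ) / δ := by
    rw [integral_Ioi_rpow_of_lt hlt hX]
    have : -(1 + δ) + 1 = -δ := by ring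
    rw [this, neg_div_neg_eq]
  have hA0 : 0 < X ^ (-δ) / δ := by positivity
  have h4 := cauchy_schwarz (μ := volume.restrict (Set.Ioi X)) (f := fun u => u ^ (-(1 + δ) / 2))
    (g := fun u => |tho c u| * u ^ (δ / 2))
    (IntegrableOn.congr_fun (integrableOn_Ioi_rpow_of_lt hlt hX) e1 measurableSet_Ioi)
    (IntegrableOn.congr_fun (tho_sq_int c hδ hX) e2 measurableSet_Ioi)
    (IntegrableOn.congr_fun h2 e3 measurableSet_Ioi)
    (by rw [← setIntegral_congr_fun measurableSet_Ioi e1, hA]; exact hA0)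
  rw [← setIntegral_congr_fun measurableSet_Ioi e1, ← setIntegral_congr_fun measurableSet_Ioi e2,
    ← setIntegral_congr_fun measurableSet_Ioi e3, hA] at h4
  set J := ∫ u in Set.Ioi X, |tho c u| * u ^ (-(1 / 2) : ℝ)
  set I := ∫ u in Set.Ioi X, tho c u ^ 2 * u ^ δ
  have h5 : ‖L (1 / 2)‖ ≤ 8 * J := by linarith
  calc ‖L (1 / 2)‖ ^ 2 ≤ (8 * J) ^ 2 := pow_le_pow_left₀ (_root_.norm_nonneg _) h5 2
    _ = 64 * J ^ 2 := by ring
    _ ≤ 64 * (X ^ (-δ) / δ * I) := by gcongr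
    _ = _ := by ring

/-- The mean square bound integrated against `u ^ δ` over `u > X`. -/
theorem integrated_mean_square {δ : ℝ} (hδ : 0 < δ) : ∃ K : ℝ, 0 ≤ K ∧ ∀ X : ℝ, 0 < X → ∀ y : ℝ,
    1 ≤ y → ∀ F : Finset GaussianInt,
    ∑ c ∈ F, gw (1 / y) c * ∫ u in Set.Ioi X, tho c u ^ 2 * u ^ δ ≤
      K * (y * X ^ (-δ) + X ^ (-(2 + 3 * δ))) := by
  obtain ⟨K, hK⟩ := mean_square (by linarith : 1 < 1 + 2 * δ)
  refine ⟨|K| * (1 / δ + 1), by positivity, fun X hX y hy F => ?_⟩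
  have hlt1 : -(1 + δ) < -1 := by linarith
  have hlt2 : -(3 + 3 * δ) < -1 := by linarith
  have hi1 := integrableOn_Ioi_rpow_of_lt hlt1 hX
  have hi2 := integrableOn_Ioi_rpow_of_lt hlt2 hX
  have hy' : 0 < 1 / y := by positivity
  have hI1 : ∫ u in Set.Ioi X, u ^ (-(1 + δ)) = X ^ (-δ) / δ := by
    rw [integral_Ioi_rpow_of_lt hlt1 hX]
    have : -(1 + δ) + 1 = -δ := by ring
    rw [this, neg_div_neg_eq]
  have hI2 : ∫ u in Set.Ioi X, u ^ (-(3 + 3 * δ)) = X ^ (-(2 + 3 * δ)) / (2 + 3 * δ) := by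
    rw [integral_Ioi_rpow_of_lt hlt2 hX]
    have : -(3 + 3 * δ) + 1 = -(2 + 3 * δ) := by ring
    rw [this, neg_div_neg_eq]
  have hs : ∀ c ∈ F, IntegrableOn (fun u => gw (1 / y) c * (tho c u ^ 2 * u ^ δ)) (Set.Ioi X) :=
    fun c _ => (tho_sq_int c hδ hX).const_mul _
  simp_rw [← integral_const_mul]
  rw [← integral_finsetSum F hs]
  have h1 : ∫ u in Set.Ioi X, ∑ c ∈ F, gw (1 / y) c * (tho c u ^ 2 * u ^ δ) ≤
      ∫ u in Set.Ioi X, |K| * (y * u ^ (-(1 + δ)) + u ^ (-(3 + 3 * δ))) := by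
    refine setIntegral_mono_on (integrable_finsetSum F hs)
      (((hi1.const_mul y).add hi2).const_mul |K|) measurableSet_Ioi (fun u hu => ?_)
    have hp : 0 < u := hX.trans hu
    have h2 := (summable_tho_sq hp hy').sum_le_tsum F
      (fun c _ => mul_nonneg (gw_pos _ _).le (sq_nonneg _))
    have h3 : 0 ≤ y * u ^ (-(1 + 2 * δ)) + u ^ (-(2 * (1 + 2 * δ) + 1)) := by positivity
    have h4 := (h2.trans (hK u hp y hy)).trans (mul_le_mul_of_nonneg_right (le_abs_self K) h3)
    have e1 : u ^ (-(1 + 2 * δ)) * u ^ δ = u ^ (-(1 + δ)) := by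
      rw [← Real.rpow_add hp]; congr 1; ring
    have e2 : u ^ (-(2 * (1 + 2 * δ) + 1)) * u ^ δ = u ^ (-(3 + 3 * δ)) := by
      rw [← Real.rpow_add hp]; congr 1; ring
    calc ∑ c ∈ F, gw (1 / y) c * (tho c u ^ 2 * u ^ δ)
        = (∑ c ∈ F, gw (1 / y) c * tho c u ^ 2) * u ^ δ := by
          rw [Finset.sum_mul]; exact Finset.sum_congr rfl fun c _ => by ring
      _ ≤ (|K| * (y * u ^ (-(1 + 2 * δ)) + u ^ (-(2 * (1 + 2 * δ) + 1)))) * u ^ δ := by gcongr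
      _ = |K| * (y * (u ^ (-(1 + 2 * δ)) * u ^ δ) + u ^ (-(2 * (1 + 2 * δ) + 1)) * u ^ δ) := by ring
      _ = _ := by rw [e1, e2]
  refine h1.trans ?_
  rw [integral_const_mul, integral_add (hi1.const_mul y) hi2, integral_const_mul, hI1, hI2, mul_assoc]
  refine mul_le_mul_of_nonneg_left ?_ (abs_nonneg K)
  have hP : 0 ≤ X ^ (-(2 + 3 * δ)) := by positivity
  have hQ : 0 ≤ y * X ^ (-δ) := by positivity
  have h5 : X ^ (-(2 + 3 * δ)) / (2 + 3 * δ) ≤ X ^ (-(2 + 3 * δ)) :=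
    div_le_self hP (by linarith)
  have h6 : 0 ≤ 1 / δ * X ^ (-(2 + 3 * δ)) := by positivity
  calc y * (X ^ (-δ) / δ) + X ^ (-(2 + 3 * δ)) / (2 + 3 * δ)
      ≤ 1 / δ * (y * X ^ (-δ)) + X ^ (-(2 + 3 * δ)) := by
        refine add_le_add (le_of_eq (by ring)) h5
    _ ≤ _ := by linarith

open scoped Classical in
/-- The second moment bound, with the constant independent of the `L`-functions and the weight. -/
theorem moment_le {ε : ℝ} (hε : 0 < ε) : ∃ C : ℝ, ∀ Φ : ℝ → ℝ,
    (∀ x : ℝ, x ∉ Set.Ioo (1 : ℝ) 2 → Φ x = 0) → (∀ x : ℝ, 0 ≤ Φ x ∧ Φ x ≤ 1) →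
    ∀ L : GaussianInt → ℂ → ℂ,
    (∀ c : GaussianInt, Squarefree c → ModOne16 c → IsHeckeL c (L c)) → ∀ y : ℝ, 1 ≤ y →
    ∑' c : GaussianInt,
      (if Squarefree c ∧ ModOne16 c then ‖L c (1 / 2)‖ ^ 2 * Φ ((gnorm c : ℝ) / y) else 0) ≤
        C * y ^ (1 + ε) := by
  have hδ : 0 < ε / 2 := half_pos hε
  set δ := ε / 2 with hδe
  obtain ⟨K, hK0, hK⟩ := integrated_mean_square hδ
  set M := 64 / δ * Real.exp (2 * Real.pi) with hM
  refine ⟨M * K * (2 ^ δ + 2 ^ (1 + ε)), fun Φ hΦ hΦr L hL y hy => ?_⟩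
  have hy0 : 0 < y := by linarith
  have h2y : 0 < 2 * y := by linarith
  -- every modulus in the support has norm below `2y`, so this cut lies below its symmetry point
  set X := 1 / √(2 * y) with hX
  have hX0 : 0 < X := by have := Real.sqrt_pos.2 h2y; positivity
  have hXp (a : ℝ) : X ^ (-a) = (2 * y) ^ (a / 2) := by
    rw [hX, one_div, Real.inv_rpow (Real.sqrt_nonneg _), Real.rpow_neg (Real.sqrt_nonneg _), inv_inv,
      Real.sqrt_eq_rpow, ← Real.rpow_mul h2y.le]
    congr 1; ring
  have key (c : GaussianInt) :
      (if Squarefree c ∧ ModOne16 c then ‖L c (1 / 2)‖ ^ 2 * Φ ((gnorm c : ℝ) / y) else 0) ≤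
      M * X ^ (-δ) * (gw (1 / y) c * ∫ u in Set.Ioi X, tho c u ^ 2 * u ^ δ) := by
    have hI : 0 ≤ ∫ u in Set.Ioi X, tho c u ^ 2 * u ^ δ :=
      setIntegral_nonneg measurableSet_Ioi fun u hu => by
        have : 0 < u := hX0.trans hu
        positivity
    have hg := gw_pos (1 / y) c
    have hR : 0 ≤ M * X ^ (-δ) * (gw (1 / y) c * ∫ u in Set.Ioi X, tho c u ^ 2 * u ^ δ) := by
      positivity
    split_ifs with h
    · by_cases hr : (gnorm c : ℝ) / y ∈ Set.Ioo (1 : ℝ) 2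
      · have hlt : (gnorm c : ℝ) < 2 * y := (div_lt_iff₀ hy0).1 hr.2
        have hgt : y < gnorm c := by have := (lt_div_iff₀ hy0).1 hr.1; linarith
        have hc : ¬IsUnit c := fun hu => by
          rw [gnorm_eq_one.2 hu] at hgt
          push_cast at hgt
          linarith
        have hX' : X ≤ 1 / √(gnorm c : ℝ) := by
          refine one_div_le_one_div_of_le (Real.sqrt_pos.2 (by linarith)) ?_
          exact Real.sqrt_le_sqrt hlt.le
        have h1 := central_sq_le h.1 h.2 hc (hL c h.1 h.2) hδ hX0 hX'
        have h2 : 1 ≤ Real.exp (2 * Real.pi) * gw (1 / y) c := by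
          rw [gw, ← Real.exp_add]
          refine Real.one_le_exp ?_
          have : Real.pi * (1 / y) * gnorm c = Real.pi * ((gnorm c : ℝ) / y) := by ring
          rw [this]
          nlinarith [Real.pi_pos, hr.2]
        calc ‖L c (1 / 2)‖ ^ 2 * Φ ((gnorm c : ℝ) / y) ≤ ‖L c (1 / 2)‖ ^ 2 :=
              mul_le_of_le_one_right (sq_nonneg _) (hΦr _).2
          _ ≤ 64 / δ * X ^ (-δ) * ∫ u in Set.Ioi X, tho c u ^ 2 * u ^ δ := h1
          _ ≤ (Real.exp (2 * Real.pi) * gw (1 / y) c) *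
              (64 / δ * X ^ (-δ) * ∫ u in Set.Ioi X, tho c u ^ 2 * u ^ δ) :=
              le_mul_of_one_le_left (by positivity) h2
          _ = _ := by rw [hM]; ring
      · rw [hΦ _ hr, mul_zero]
        exact hR
    · exact hR
  have hB : M * X ^ (-δ) * (K * (y * X ^ (-δ) + X ^ (-(2 + 3 * δ)))) =
      M * K * (2 ^ δ + 2 ^ (1 + ε)) * y ^ (1 + ε) - M * K * 2 ^ δ * (y ^ (1 + ε) - y ^ (1 + δ)) := by
    have e1 : X ^ (-δ) * X ^ (-δ) = 2 ^ δ * y ^ δ := by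
      rw [← Real.rpow_add hX0, ← neg_add, hXp, ← Real.mul_rpow two_pos.le hy0.le]; congr 1; ring
    have e2 : X ^ (-δ) * X ^ (-(2 + 3 * δ)) = 2 ^ (1 + ε) * y ^ (1 + ε) := by
      rw [← Real.rpow_add hX0, ← neg_add, hXp, ← Real.mul_rpow two_pos.le hy0.le]; congr 1
      rw [hδe]; ring
    have e3 : y ^ (1 + δ) = y * y ^ δ := by rw [Real.rpow_add hy0, Real.rpow_one]
    rw [e3]
    linear_combination (M * K * y) * e1 + (M * K) * e2
  have hmono : y ^ (1 + δ) ≤ y ^ (1 + ε) :=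
    Real.rpow_le_rpow_of_exponent_le hy (by rw [hδe]; linarith)
  have hM0 : 0 ≤ M := by positivity
  have hle : M * X ^ (-δ) * (K * (y * X ^ (-δ) + X ^ (-(2 + 3 * δ)))) ≤
      M * K * (2 ^ δ + 2 ^ (1 + ε)) * y ^ (1 + ε) := by
    rw [hB]
    have : 0 ≤ M * K * 2 ^ δ * (y ^ (1 + ε) - y ^ (1 + δ)) :=
      mul_nonneg (by positivity) (sub_nonneg.2 hmono)
    linarith
  refine tsum_le_of_sum_le' (by positivity) fun F => ?_
  refine (Finset.sum_le_sum fun c _ => key c).trans ?_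
  rw [← Finset.mul_sum]
  exact (mul_le_mul_of_nonneg_left (hK X hX0 y hy F) (by positivity)).trans hle

open scoped Classical in
/-- Theorem 1.2 (second moment): for `Φ` smooth, `0 ≤ Φ ≤ 1`, compactly supported in
`(1,2)`, and every `ε > 0`,
`Σ*_{c ≡ 1 (16)} |L(1/2, χ_c)|² Φ(N(c)/y) ≪_ε y^{1+ε}` as `y → ∞`. -/
theorem second_moment
    (Φ : ℝ → ℝ) (hΦsmooth : ContDiff ℝ (⊤ : ℕ∞) Φ)
    (hΦsupp : ∀ x : ℝ, x ∉ Set.Ioo (1 : ℝ) 2 → Φ x = 0)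
    (hΦrange : ∀ x : ℝ, 0 ≤ Φ x ∧ Φ x ≤ 1)
    (L : GaussianInt → ℂ → ℂ)
    (hL : ∀ c : GaussianInt, Squarefree c → ModOne16 c → IsHeckeL c (L c))
    (ε : ℝ) (hε : 0 < ε) :
    (fun y : ℝ =>
        ∑' c : GaussianInt,
          if Squarefree c ∧ ModOne16 c then ‖L c (1 / 2)‖ ^ 2 * Φ ((gnorm c : ℝ) / y) else 0)
      =O[atTop] fun y : ℝ => y ^ (1 + ε) := by
  obtain ⟨C, hC⟩ := moment_le hε
  refine IsBigO.of_bound C ?_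
  filter_upwards [eventually_ge_atTop 1] with y hy
  rw [Real.norm_of_nonneg (tsum_nonneg fun c => ?_), Real.norm_of_nonneg (by positivity)]
  · exact hC Φ hΦsupp hΦrange L hL y hy
  · split_ifs
    · exact mul_nonneg (sq_nonneg _) (hΦrange _).1
    · exact le_rfl

end
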